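/- arXiv:2505.07795 — 3 statements merged into one kernel-verified Lean document; each statement's English description precedes it below -/
import Mathlib

section
/- Let D ≥ 1 and k ≥ 1 be integers, let μ be the normalized Haar probability measure on the unitary group U(D), and let e₁ be a fixed unit vector of ℂ^D. Then the k-th moment of the Haar random pure state ensemble equals the normalized sum of permutation operators: ∫_{U(D)} (U |e₁⟩⟨e₁| U†)^{⊗k} dμ(U) = ((D−1)!/(D+k−1)!) Σ_{g ∈ S_k} P_D(g). -/
open Matrix MeasureTheory

/-- The Borel σ-algebra on matrices. -/
noncomputable instance matrixMeasurableSpace {m n : Type*} :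
    MeasurableSpace (Matrix m n ℂ) := borel _

/-- The permutation operator `P_D(g)` on `(ℂ^D)^{⊗k}`, defined on the standard tensor basis by
`P_D(g) |i_1,…,i_k⟩ = |i_{g(1)},…,i_{g(k)}⟩`. -/
def permMatrix (D : ℕ) {k : ℕ} (g : Equiv.Perm (Fin k)) :
    Matrix (Fin k → Fin D) (Fin k → Fin D) ℂ :=
  fun r c => if r = fun a => c (g a) then 1 else 0

/-- The `k`-fold tensor power `M^{⊗k}` of a `D × D` matrix. -/
def tensorPow {D k : ℕ} (M : Matrix (Fin D) (Fin D) ℂ) :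
    Matrix (Fin k → Fin D) (Fin k → Fin D) ℂ :=
  fun r c => ∏ a, M (r a) (c a)

/-!
The law of `ψ = U e₁` is a unitarily invariant probability measure `ν` on the unit sphere of
`ℂ^D`, and unitary invariance alone determines its moments `∫ ∏ₐ ⟨xₐ|ψ⟩ ∏_b ⟨ψ|y_b⟩ dν(ψ)`.
Invariance under `exp (i t A)` says, to first order in `t`, that inserting a self-adjoint `A` in
the bras gives the same moment as inserting it in the kets, and by complex linearity this holds for
every operator with `A†` in the bras. For `A = |u⟩⟨v|` with `u` running through an orthonormal
basis, the normalization `∑ⱼ ⟨uⱼ|ψ⟩⟨ψ|uⱼ⟩ = 1` turns this into a recursion in the number `k` of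
bras and kets, with prefactor `D + k - 1`. It is the Laplace expansion of the permanent of the Gram
matrix `⟨xₐ|y_b⟩`, and on basis vectors that permanent counts the permutations which match `x`
with `y`.
-/

open scoped ComplexInnerProductSpace ComplexStarModule

section Permanent

theorem permanent_succ_row_zero {R : Type*} [CommSemiring R] {k : ℕ}
    (M : Matrix (Fin (k + 1)) (Fin (k + 1)) R) :
    M.permanent = ∑ j, M 0 j * (M.submatrix Fin.succ j.succAbove).permanent := by
  have swap_comp_succ (j : Fin (k + 1)) :
      ∃ τ : Equiv.Perm (Fin k), ∀ i, Equiv.swap 0 j i.succ = j.succAbove (τ i) := by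
    cases j using Fin.cases with
    | zero => exact ⟨1, by simp⟩
    | succ j => exact ⟨j.cycleRange, fun i => (Fin.succAbove_cycleRange j i).symm⟩
  rw [← permanent_transpose, permanent, ← Equiv.sum_comp Equiv.Perm.decomposeFin.symm,
    Fintype.sum_prod_type]
  refine Finset.sum_congr rfl fun j _ => ?_
  obtain ⟨τ, hτ⟩ := swap_comp_succ j
  rw [← permanent_transpose (M.submatrix _ _), ← permanent_permute_cols τ, permanent,
    Finset.mul_sum]
  simp [Fin.prod_univ_succ, hτ]

end Permanent

section Overlap

variable {H ι κ : Type*} [NormedAddCommGroup H] [InnerProductSpace ℂ H] [Fintype ι] [Fintype κ]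

/-- The integrand of the moments of a random vector `ψ`: its overlaps with the bras `x a` and
the kets `y b`, multiplied together. -/
noncomputable def overlap (x : ι → H) (y : κ → H) (ψ : H) : ℂ :=
  (∏ a, ⟪x a, ψ⟫) * ∏ b, ⟪ψ, y b⟫

theorem continuous_overlap (x : ι → H) (y : κ → H) : Continuous (overlap x y) := by
  unfold overlap
  fun_prop

theorem star_overlap (x : ι → H) (y : κ → H) (ψ : H) :
    star (overlap x y ψ) = overlap y x ψ := by
  simp [overlap, mul_comm]

theorem overlap_comp_perm_left (σ : Equiv.Perm ι) (x : ι → H) (y : κ → H) (ψ : H) :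
    overlap (x ∘ σ) y ψ = overlap x y ψ := by
  rw [overlap, overlap, ← Equiv.prod_comp σ (fun a => ⟪x a, ψ⟫)]
  rfl

theorem overlap_map_unitary [CompleteSpace H] (V : unitary (H →L[ℂ] H)) (x : ι → H) (y : κ → H)
    (ψ : H) :
    overlap (fun a => (V : H →L[ℂ] H) (x a)) (fun b => (V : H →L[ℂ] H) (y b))
      ((V : H →L[ℂ] H) ψ) = overlap x y ψ := by
  simp only [overlap, ContinuousLinearMap.inner_map_map_of_mem_unitary V.2]

theorem norm_overlap_le (x : ι → H) (y : κ → H) {ψ : H} (hψ : ‖ψ‖ = 1) :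
    ‖overlap x y ψ‖ ≤ (∏ a, ‖x a‖) * ∏ b, ‖y b‖ := by
  rw [overlap, norm_mul, norm_prod, norm_prod]
  gcongr with a _ b _
  · simpa [hψ] using norm_inner_le_norm (x a) ψ
  · simpa [hψ] using norm_inner_le_norm ψ (y b)

theorem overlap_update_left [DecidableEq ι] (x : ι → H) (y : κ → H) (a : ι) (v ψ : H) :
    overlap (Function.update x a v) y ψ =
      ⟪v, ψ⟫ * ((∏ i ∈ Finset.univ \ {a}, ⟪x i, ψ⟫) * ∏ b, ⟪ψ, y b⟫) := by
  simp only [overlap, Function.apply_update (fun _ u => ⟪u, ψ⟫), ← mul_assoc,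
    Finset.prod_update_of_mem (Finset.mem_univ a)]

theorem sum_overlap_update_update {l : Type*} [Fintype l] (B : OrthonormalBasis l ℂ H) {m n : ℕ}
    (x : Fin (m + 1) → H) (y : Fin (n + 1) → H) (a : Fin (m + 1)) (b : Fin (n + 1))
    {ψ : H} (hψ : ‖ψ‖ = 1) :
    ∑ j, overlap (Function.update x a (B j)) (Function.update y b (B j)) ψ =
      overlap (a.removeNth x) (b.removeNth y) ψ := by
  have factor (u : H) : overlap (Function.update x a u) (Function.update y b u) ψ =
      ⟪ψ, u⟫ * ⟪u, ψ⟫ * overlap (a.removeNth x) (b.removeNth y) ψ := by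
    simp only [overlap, Fin.prod_univ_succAbove _ a, Fin.prod_univ_succAbove _ b,
      Function.update_self, Function.update_of_ne (Fin.succAbove_ne _ _), Fin.removeNth]
    ring
  simp_rw [factor, ← Finset.sum_mul, B.sum_inner_mul_inner, inner_self_eq_norm_sq_to_K, hψ]
  simp

end Overlap

section Moment

variable {H ι κ : Type*} [NormedAddCommGroup H] [InnerProductSpace ℂ H] [MeasurableSpace H]
  [Fintype ι] [Fintype κ] {ν : Measure H}

/-- The mixed moment `∫ ∏ₐ ⟨xₐ|ψ⟩ ∏_b ⟨ψ|y_b⟩ dν(ψ)`, that is, the matrix coefficient of the moment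
operator `∫ (|ψ⟩⟨ψ|)^{⊗k} dν(ψ)` at the product vectors `⊗ₐ xₐ` and `⊗_b y_b` when `ι` and `κ` both
have `k` elements. -/
noncomputable def overlapMoment (ν : Measure H) (x : ι → H) (y : κ → H) : ℂ :=
  ∫ ψ, overlap x y ψ ∂ν

theorem star_overlapMoment (x : ι → H) (y : κ → H) :
    star (overlapMoment ν x y) = overlapMoment ν y x := by
  simp only [overlapMoment, ← star_overlap x y]
  exact integral_conj.symm

theorem overlapMoment_comp_perm_left (σ : Equiv.Perm ι) (x : ι → H) (y : κ → H) :
    overlapMoment ν (x ∘ σ) y = overlapMoment ν x y := by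
  simp only [overlapMoment, overlap_comp_perm_left]

theorem overlapMoment_update_left_smul [DecidableEq ι] (x : ι → H) (y : κ → H) (a : ι) (c : ℂ)
    (v : H) :
    overlapMoment ν (Function.update x a (c • v)) y =
      star c * overlapMoment ν (Function.update x a v) y := by
  simp only [overlapMoment, overlap_update_left, inner_smul_left, mul_assoc, integral_const_mul]
  rfl

theorem overlapMoment_update_right_smul [DecidableEq κ] (x : ι → H) (y : κ → H) (b : κ) (c : ℂ)
    (v : H) :
    overlapMoment ν x (Function.update y b (c • v)) =
      c * overlapMoment ν x (Function.update y b v) := by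
  rw [← star_overlapMoment, overlapMoment_update_left_smul, star_mul', star_star,
    star_overlapMoment]

variable [IsFiniteMeasure ν]

theorem norm_overlapMoment_le (hs : ∀ᵐ ψ ∂ν, ‖ψ‖ = 1) (x : ι → H) (y : κ → H) :
    ‖overlapMoment ν x y‖ ≤ ν.real Set.univ * ((∏ a, ‖x a‖) * ∏ b, ‖y b‖) := by
  rw [mul_comm (ν.real _)]
  exact norm_integral_le_of_norm_le_const (hs.mono fun _ => norm_overlap_le x y)

variable [BorelSpace H]

theorem integrable_overlap (hs : ∀ᵐ ψ ∂ν, ‖ψ‖ = 1) (x : ι → H) (y : κ → H) :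
    Integrable (overlap x y) ν :=
  .of_bound (continuous_overlap x y).aestronglyMeasurable _ (hs.mono fun _ => norm_overlap_le x y)

theorem overlapMoment_update_left_add [DecidableEq ι] (hs : ∀ᵐ ψ ∂ν, ‖ψ‖ = 1) (x : ι → H)
    (y : κ → H) (a : ι) (u v : H) :
    overlapMoment ν (Function.update x a (u + v)) y =
      overlapMoment ν (Function.update x a u) y + overlapMoment ν (Function.update x a v) y := by
  rw [overlapMoment, overlapMoment, overlapMoment,
    ← integral_add (integrable_overlap hs _ _) (integrable_overlap hs _ _)]
  simp only [overlap_update_left, inner_add_left, add_mul]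

theorem overlapMoment_update_right_add [DecidableEq κ] (hs : ∀ᵐ ψ ∂ν, ‖ψ‖ = 1) (x : ι → H)
    (y : κ → H) (b : κ) (u v : H) :
    overlapMoment ν x (Function.update y b (u + v)) =
      overlapMoment ν x (Function.update y b u) + overlapMoment ν x (Function.update y b v) := by
  rw [← star_overlapMoment, overlapMoment_update_left_add hs, star_add, star_overlapMoment,
    star_overlapMoment]

/-- The mixed moments as a continuous multilinear map in all their arguments. The scalars are
real because the moments are antilinear in the bras. -/
noncomputable def overlapMomentMultilinear (ι κ : Type*) [Fintype ι] [Fintype κ]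
    (hs : ∀ᵐ ψ ∂ν, ‖ψ‖ = 1) : ContinuousMultilinearMap ℝ (fun _ : ι ⊕ κ => H) ℂ :=
  MultilinearMap.mkContinuous
    { toFun := fun z => overlapMoment ν (z ∘ Sum.inl) (z ∘ Sum.inr)
      map_update_add' := by
        classical
        rintro _ z (a | b) u v <;>
          simp [overlapMoment_update_left_add hs, overlapMoment_update_right_add hs]
      map_update_smul' := by
        classical
        rintro _ z (a | b) c v <;> rw [← Complex.coe_smul c v] <;>
          simp [-Complex.coe_smul, overlapMoment_update_left_smul,
            overlapMoment_update_right_smul] }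
    (ν.real Set.univ) fun z => by
      rw [Fintype.prod_sum_type]
      exact norm_overlapMoment_le hs _ _

theorem overlapMomentMultilinear_apply (hs : ∀ᵐ ψ ∂ν, ‖ψ‖ = 1) (z : ι ⊕ κ → H) :
    overlapMomentMultilinear ι κ hs z = overlapMoment ν (z ∘ Sum.inl) (z ∘ Sum.inr) :=
  rfl

theorem hasDerivAt_overlapMoment [DecidableEq ι] [DecidableEq κ] (hs : ∀ᵐ ψ ∂ν, ‖ψ‖ = 1)
    {x : ℝ → ι → H} {y : ℝ → κ → H} {x' : ι → H} {y' : κ → H} {t : ℝ}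
    (hx : ∀ a, HasDerivAt (fun s => x s a) (x' a) t)
    (hy : ∀ b, HasDerivAt (fun s => y s b) (y' b) t) :
    HasDerivAt (fun s => overlapMoment ν (x s) (y s))
      (∑ a, overlapMoment ν (Function.update (x t) a (x' a)) (y t) +
        ∑ b, overlapMoment ν (x t) (Function.update (y t) b (y' b))) t := by
  have hz (i : ι ⊕ κ) : HasDerivAt (fun s => Sum.elim (x s) (y s) i) (Sum.elim x' y' i) t :=
    match i with
    | .inl a => hx a
    | .inr b => hy b
  have h := ((overlapMomentMultilinear ι κ hs).hasFDerivAt (Sum.elim (x t) (y t))).comp_hasDerivAt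
    t (hasDerivAt_pi.2 hz)
  rw [ContinuousMultilinearMap.linearDeriv_apply, Fintype.sum_sum_type] at h
  simp only [overlapMomentMultilinear_apply, Sum.update_elim_inl, Sum.update_elim_inr,
    Sum.elim_inl, Sum.elim_inr, Sum.elim_comp_inl, Sum.elim_comp_inr] at h
  exact h

theorem sum_inner_mul_overlapMoment_update_left [DecidableEq ι] {l : Type*} [Fintype l]
    (B : OrthonormalBasis l ℂ H) (hs : ∀ᵐ ψ ∂ν, ‖ψ‖ = 1) (x : ι → H) (y : κ → H) (a : ι) (z : H) :
    ∑ j, ⟪z, B j⟫ * overlapMoment ν (Function.update x a (B j)) y =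
      overlapMoment ν (Function.update x a z) y := by
  simp only [overlapMoment, ← integral_const_mul]
  rw [← integral_finsetSum _ fun j _ => (integrable_overlap hs _ _).const_mul _]
  simp only [overlap_update_left, ← mul_assoc, ← Finset.sum_mul, B.sum_inner_mul_inner]

theorem sum_overlapMoment_update_update {l : Type*} [Fintype l] (B : OrthonormalBasis l ℂ H)
    (hs : ∀ᵐ ψ ∂ν, ‖ψ‖ = 1) {m n : ℕ} (x : Fin (m + 1) → H) (y : Fin (n + 1) → H)
    (a : Fin (m + 1)) (b : Fin (n + 1)) :
    ∑ j, overlapMoment ν (Function.update x a (B j)) (Function.update y b (B j)) =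
      overlapMoment ν (a.removeNth x) (b.removeNth y) := by
  simp only [overlapMoment]
  rw [← integral_finsetSum _ fun j _ => integrable_overlap hs _ _]
  exact integral_congr_ae (hs.mono fun ψ hψ => sum_overlap_update_update B x y a b hψ)

end Moment

section Invariance

theorem hasDerivAt_expUnitary_smul {A : Type*} [NormedRing A] [NormedAlgebra ℂ A] [StarRing A]
    [ContinuousStar A] [CompleteSpace A] [StarModule ℂ A] (a : selfAdjoint A) :
    HasDerivAt (fun t : ℝ => (selfAdjoint.expUnitary (t • a) : A)) (Complex.I • (a : A)) 0 := by
  simpa [smul_comm Complex.I] using hasDerivAt_exp_smul_const (𝕂 := ℝ) (Complex.I • (a : A)) 0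

variable {H ι κ : Type*} [NormedAddCommGroup H] [InnerProductSpace ℂ H] [CompleteSpace H]
  [MeasurableSpace H] {ν : Measure H}

/-- Invariance of a measure on a Hilbert space under its unitary group. A unitarily invariant
probability measure concentrated on unit vectors is the law of a Haar random pure state. -/
def IsUnitarilyInvariant (ν : Measure H) : Prop :=
  ∀ V : unitary (H →L[ℂ] H), ν.map (V : H →L[ℂ] H) = ν

namespace IsUnitarilyInvariant

variable [Fintype ι] [Fintype κ] [BorelSpace H]

theorem overlapMoment_map (hν : IsUnitarilyInvariant ν) (V : unitary (H →L[ℂ] H)) (x : ι → H)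
    (y : κ → H) :
    overlapMoment ν (fun a => (V : H →L[ℂ] H) (x a)) (fun b => (V : H →L[ℂ] H) (y b)) =
      overlapMoment ν x y := by
  conv_lhs => rw [overlapMoment, ← hν V]
  rw [integral_map (V : H →L[ℂ] H).continuous.aemeasurable
    (continuous_overlap _ _).aestronglyMeasurable]
  simp only [overlap_map_unitary, overlapMoment]

variable [IsFiniteMeasure ν] [DecidableEq ι] [DecidableEq κ]

theorem sum_overlapMoment_update_selfAdjoint (hν : IsUnitarilyInvariant ν)
    (hs : ∀ᵐ ψ ∂ν, ‖ψ‖ = 1) (A : selfAdjoint (H →L[ℂ] H)) (x : ι → H) (y : κ → H) :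
    ∑ a, overlapMoment ν (Function.update x a ((A : H →L[ℂ] H) (x a))) y =
      ∑ b, overlapMoment ν x (Function.update y b ((A : H →L[ℂ] H) (y b))) := by
  let V (t : ℝ) : H →L[ℂ] H := selfAdjoint.expUnitary (t • A)
  have V_zero (u : H) : V 0 u = u := by simp [V]
  have hasDerivAt_V (u : H) : HasDerivAt (fun t => V t u) (Complex.I • (A : H →L[ℂ] H) u) 0 :=
    ((ContinuousLinearMap.apply ℂ H u).restrictScalars ℝ).hasFDerivAt.comp_hasDerivAt 0
      (hasDerivAt_expUnitary_smul A)
  have deriv_moment := hasDerivAt_overlapMoment hs (fun a => hasDerivAt_V (x a))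
    fun b => hasDerivAt_V (y b)
  have moment_const : (fun t => overlapMoment ν (fun a => V t (x a)) fun b => V t (y b)) =
      fun _ => overlapMoment ν x y :=
    funext fun t => hν.overlapMoment_map _ x y
  rw [moment_const] at deriv_moment
  have deriv_eq_zero := deriv_moment.unique (hasDerivAt_const _ _)
  simp only [V_zero, overlapMoment_update_left_smul, overlapMoment_update_right_smul,
    ← Finset.mul_sum, Complex.star_def, Complex.conj_I] at deriv_eq_zero
  refine mul_left_cancel₀ Complex.I_ne_zero ?_
  linear_combination -deriv_eq_zero

theorem sum_overlapMoment_update_adjoint (hν : IsUnitarilyInvariant ν)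
    (hs : ∀ᵐ ψ ∂ν, ‖ψ‖ = 1) (A : H →L[ℂ] H) (x : ι → H) (y : κ → H) :
    ∑ a, overlapMoment ν (Function.update x a (A.adjoint (x a))) y =
      ∑ b, overlapMoment ν x (Function.update y b (A (y b))) := by
  rw [← ContinuousLinearMap.star_eq_adjoint, ← realPart_add_I_smul_imaginaryPart A]
  simp [overlapMoment_update_left_add hs, overlapMoment_update_right_add hs,
    overlapMoment_update_left_smul, overlapMoment_update_right_smul, Finset.sum_add_distrib,
    -neg_smul, ← Finset.mul_sum, sum_overlapMoment_update_selfAdjoint hν hs]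

theorem sum_inner_mul_overlapMoment_update (hν : IsUnitarilyInvariant ν)
    (hs : ∀ᵐ ψ ∂ν, ‖ψ‖ = 1) (u v : H) (x : ι → H) (y : κ → H) :
    ∑ a, ⟪x a, u⟫ * overlapMoment ν (Function.update x a v) y =
      ∑ b, ⟪v, y b⟫ * overlapMoment ν x (Function.update y b u) := by
  simpa [overlapMoment_update_left_smul, overlapMoment_update_right_smul] using
    hν.sum_overlapMoment_update_adjoint hs (InnerProductSpace.rankOne ℂ u v) x y

/- Sum `sum_inner_mul_overlapMoment_update` over `u = B j`, with `v = x 0` and `B j` substituted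
for `x 0`. On the left the slot `0` contributes the dimension and every other slot contributes `1`,
by symmetry of the moments; on the right `‖ψ‖ = 1` removes `B j` from both sides. -/
theorem finrank_add_mul_overlapMoment_succ [FiniteDimensional ℂ H] (hν : IsUnitarilyInvariant ν)
    (hs : ∀ᵐ ψ ∂ν, ‖ψ‖ = 1) {m n : ℕ} (x : Fin (m + 1) → H) (y : Fin (n + 1) → H) :
    ((Module.finrank ℂ H : ℂ) + m) * overlapMoment ν x y =
      ∑ b, ⟪x 0, y b⟫ * overlapMoment ν (Fin.tail x) (b.removeNth y) := by
  let B := stdOrthonormalBasis ℂ H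
  have slot_succ (a : Fin m) :
      ∑ j, ⟪x a.succ, B j⟫ *
        overlapMoment ν (Function.update (Function.update x 0 (B j)) a.succ (x 0)) y =
      overlapMoment ν x y := by
    simp only [Function.update_comm (Fin.succ_ne_zero a).symm]
    rw [sum_inner_mul_overlapMoment_update_left B hs,
      Function.update_comm (Fin.succ_ne_zero a), ← Equiv.comp_swap_eq_update,
      overlapMoment_comp_perm_left]
  have contraction (b : Fin (n + 1)) :
      ∑ j, overlapMoment ν (Function.update x 0 (B j)) (Function.update y b (B j)) =
        overlapMoment ν (Fin.tail x) (b.removeNth y) := by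
    rw [sum_overlapMoment_update_update B hs, Fin.removeNth_zero]
  calc ((Module.finrank ℂ H : ℂ) + m) * overlapMoment ν x y
      = ∑ j, ∑ a, ⟪Function.update x 0 (B j) a, B j⟫ *
          overlapMoment ν (Function.update (Function.update x 0 (B j)) a (x 0)) y := by
        rw [Finset.sum_comm, Fin.sum_univ_succ]
        simp [slot_succ, add_mul]
    _ = ∑ j, ∑ b, ⟪x 0, y b⟫ *
          overlapMoment ν (Function.update x 0 (B j)) (Function.update y b (B j)) := by
        simp only [hν.sum_inner_mul_overlapMoment_update hs]
    _ = ∑ b, ⟪x 0, y b⟫ * overlapMoment ν (Fin.tail x) (b.removeNth y) := by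
        rw [Finset.sum_comm]
        simp only [← Finset.mul_sum, contraction]

theorem ascFactorial_mul_overlapMoment [FiniteDimensional ℂ H] (hν : IsUnitarilyInvariant ν)
    (hs : ∀ᵐ ψ ∂ν, ‖ψ‖ = 1) {k : ℕ} (x y : Fin k → H) :
    ((Module.finrank ℂ H).ascFactorial k : ℂ) * overlapMoment ν x y =
      ν.real Set.univ * (Matrix.of fun a b => ⟪x a, y b⟫).permanent := by
  induction k with
  | zero => simp [overlapMoment, overlap, permanent]
  | succ k ih =>
    rw [Nat.ascFactorial_succ, permanent_succ_row_zero, Nat.cast_mul, Nat.cast_add, mul_right_comm,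
      hν.finrank_add_mul_overlapMoment_succ hs, mul_comm, Finset.mul_sum, Finset.mul_sum]
    refine Finset.sum_congr rfl fun b _ => ?_
    rw [mul_left_comm, ih, mul_left_comm]
    rfl

end IsUnitarilyInvariant

end Invariance

section HaarState

variable {n : Type*} [Fintype n] [DecidableEq n]

instance matrixBorelSpace {l m : Type*} : BorelSpace (Matrix l m ℂ) := ⟨rfl⟩

/-- The Haar random state `U e`, as a vector of the Hilbert space `ℂⁿ`. -/
noncomputable def haarState (e : n → ℂ) (U : unitaryGroup n ℂ) : EuclideanSpace ℂ n :=
  WithLp.toLp 2 ((U : Matrix n n ℂ) *ᵥ e)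

theorem continuous_haarState (e : n → ℂ) : Continuous (haarState e) := by
  unfold haarState
  fun_prop

theorem norm_haarState {e : n → ℂ} (he : star e ⬝ᵥ e = 1) (U : unitaryGroup n ℂ) :
    ‖haarState e U‖ = 1 := by
  have inner_self : ⟪haarState e U, haarState e U⟫ = 1 := by
    rw [haarState, EuclideanSpace.inner_toLp_toLp, dotProduct_comm, star_mulVec,
      ← dotProduct_mulVec, mulVec_mulVec, ← star_eq_conjTranspose, Unitary.coe_star_mul_self,
      one_mulVec, he]
  rw [norm_eq_sqrt_re_inner (𝕜 := ℂ), inner_self, RCLike.one_re, Real.sqrt_one]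

theorem isUnitarilyInvariant_map_haarState {μ : Measure (unitaryGroup n ℂ)}
    (hμ : ∀ V, μ.map (fun U => V * U) = μ) (e : n → ℂ) :
    IsUnitarilyInvariant (μ.map (haarState e)) := by
  intro V
  let W : unitaryGroup n ℂ := ⟨(toEuclideanCLM (n := n) (𝕜 := ℂ)).symm V,
    Unitary.map_mem (toEuclideanCLM (n := n) (𝕜 := ℂ)).symm V.2⟩
  have map_haarState :
      (V : EuclideanSpace ℂ n →L[ℂ] EuclideanSpace ℂ n) ∘ haarState e =
        haarState e ∘ fun U => W * U := by
    ext1 U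
    have V_eq : (V : EuclideanSpace ℂ n →L[ℂ] EuclideanSpace ℂ n) =
        toEuclideanCLM (𝕜 := ℂ) (W : Matrix n n ℂ) :=
      (toEuclideanCLM.apply_symm_apply _).symm
    simp [V_eq, haarState, mulVec_mulVec]
  have measurable_haarState := (continuous_haarState e).measurable
  rw [Measure.map_map V.1.continuous.measurable measurable_haarState, map_haarState,
    ← Measure.map_map measurable_haarState (by fun_prop), hμ]

theorem permanent_inner_single {ι : Type*} [Fintype ι] [DecidableEq ι] (r c : ι → n) :
    (Matrix.of fun a b => ⟪EuclideanSpace.single (r a) (1 : ℂ),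
      EuclideanSpace.single (c b) (1 : ℂ)⟫).permanent =
      ∑ g : Equiv.Perm ι, if r = fun a => c (g a) then 1 else 0 := by
  rw [← permanent_transpose, permanent]
  refine Finset.sum_congr rfl fun g _ => ?_
  simp [funext_iff, EuclideanSpace.inner_single_left, Finset.prod_ite_zero]

theorem tensorPow_haarState {D k : ℕ} (e : Fin D → ℂ) (U : unitaryGroup (Fin D) ℂ)
    (r c : Fin k → Fin D) :
    tensorPow ((U : Matrix (Fin D) (Fin D) ℂ) * vecMulVec e (star e) *
        (U : Matrix (Fin D) (Fin D) ℂ)ᴴ) r c =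
      overlap (fun a => EuclideanSpace.single (r a) (1 : ℂ))
        (fun b => EuclideanSpace.single (c b) (1 : ℂ)) (haarState e U) := by
  simp [tensorPow, overlap, haarState, mul_vecMulVec, vecMulVec_mul, vecMulVec_apply,
    ← star_mulVec, Finset.prod_mul_distrib, EuclideanSpace.inner_single_left,
    EuclideanSpace.inner_single_right]

theorem integral_tensorPow_haarState {D k : ℕ} (μ : Measure (unitaryGroup (Fin D) ℂ))
    (e : Fin D → ℂ) (r c : Fin k → Fin D) :
    ∫ U, tensorPow ((U : Matrix (Fin D) (Fin D) ℂ) * vecMulVec e (star e) *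
        (U : Matrix (Fin D) (Fin D) ℂ)ᴴ) r c ∂μ =
      overlapMoment (μ.map (haarState e)) (fun a => EuclideanSpace.single (r a) (1 : ℂ))
        fun b => EuclideanSpace.single (c b) (1 : ℂ) := by
  simp only [tensorPow_haarState]
  exact (integral_map (continuous_haarState e).aemeasurable
    (continuous_overlap _ _).aestronglyMeasurable).symm

end HaarState

/-- For `μ` the normalized Haar (i.e. left-invariant) probability measure on the unitary group
`U(D)` and `e₁` a fixed unit vector of `ℂ^D`, the `k`-th moment of the Haar random pure state
ensemble equals the normalized sum of permutation operators:
`∫ (U|e₁⟩⟨e₁|U†)^{⊗k} dμ(U) = ((D−1)!/(D+k−1)!) Σ_{g ∈ S_k} P_D(g)`. -/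
theorem haar_state_moment (D k : ℕ) (hD : 1 ≤ D) (hk : 1 ≤ k)
    (μ : Measure ↥(Matrix.unitaryGroup (Fin D) ℂ)) [IsProbabilityMeasure μ]
    (hμ : ∀ V : ↥(Matrix.unitaryGroup (Fin D) ℂ), μ.map (fun U => V * U) = μ)
    (e₁ : Fin D → ℂ) (he : star e₁ ⬝ᵥ e₁ = 1) :
    ∀ r c : Fin k → Fin D,
      (∫ U : ↥(Matrix.unitaryGroup (Fin D) ℂ),
          tensorPow (k := k)
            ((U : Matrix (Fin D) (Fin D) ℂ) * vecMulVec e₁ (star e₁) *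
              (U : Matrix (Fin D) (Fin D) ℂ)ᴴ) r c ∂μ)
        = (((D - 1).factorial : ℂ) / ((D + k - 1).factorial : ℂ)) *
            (∑ g : Equiv.Perm (Fin k), permMatrix D g) r c := by
  intro r c
  have invariant := isUnitarilyInvariant_map_haarState hμ e₁
  have measurable_haarState := (continuous_haarState e₁).aemeasurable (μ := μ)
  have : IsProbabilityMeasure (μ.map (haarState e₁)) :=
    Measure.isProbabilityMeasure_map measurable_haarState
  have norm_eq_one : ∀ᵐ ψ ∂μ.map (haarState e₁), ‖ψ‖ = 1 :=
    (ae_map_iff measurable_haarState (measurableSet_eq_fun measurable_norm measurable_const)).2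
      (.of_forall (norm_haarState he))
  have moment := invariant.ascFactorial_mul_overlapMoment norm_eq_one
    (fun a => EuclideanSpace.single (r a) 1) fun b => EuclideanSpace.single (c b) 1
  rw [finrank_euclideanSpace_fin, probReal_univ, Complex.ofReal_one, one_mul,
    permanent_inner_single, ← integral_tensorPow_haarState] at moment
  rw [div_mul_eq_mul_div, eq_div_iff (by exact_mod_cast Nat.factorial_ne_zero _),
    ← Nat.factorial_mul_ascFactorial' D k hD, Nat.cast_mul, Matrix.sum_apply]
  simp only [permMatrix, ← moment]
  ring
end

section
/- Let D ≥ 1 and k ≥ 1 be integers. A linear operator M on (ℂ^D)^{⊗k} commutes with U^{⊗k} for every unitary U ∈ U(D) if and only if M lies in the complex linear span of the permutation operators {P_D(g) : g ∈ S_k} (Schur–Weyl duality for the commutant of the diagonal unitary action). -/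
open Matrix

/-!
The permutation operators are, up to `g ↦ g⁻¹`, a representation of the finite group `S_k`, so the
double commutant theorem makes their span equal to its own double commutant. It remains to see that
the powers `U^{⊗k}` of unitaries span the commutant of `S_k`. A functional `φ` on operators gives
the polynomial `A ↦ φ(A^{⊗k})` in the entries of `A`. If `φ` kills every `U^{⊗k}`, this polynomial
vanishes on the unitary group, hence identically: writing a Hermitian matrix as `V * diag d * V⁻¹`,
one passes from `d` with entries on the unit circle to arbitrary `d`, and then from the Hermitian
matrices `H + t K` with `t` real to `H + i K`. The coefficients of the polynomial are the sums of
the entries of `φ` over the `S_k`-orbits of pairs of multi-indices, so `φ` kills every operator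
whose entries are constant on these orbits, that is, every operator commuting with `S_k`.
-/

section Centralizer

variable {R A : Type*} [CommSemiring R] [Semiring A] [Algebra R A] {s t : Set A}

theorem span_subset_centralizer (h : s ⊆ Set.centralizer t) :
    (Submodule.span R s : Set A) ⊆ Set.centralizer t :=
  Submodule.span_le (p := (Subalgebra.centralizer R t).toSubmodule).2 h

variable (R s) in
theorem centralizer_span :
    Set.centralizer (Submodule.span R s : Set A) = Set.centralizer s :=
  (Set.centralizer_subset Submodule.subset_span).antisymm <|
    fun _ ha _ hb =>
      (span_subset_centralizer Set.subset_centralizer_centralizer hb _ ha).symm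

end Centralizer

section DoubleCommutant

variable {K G : Type*}

theorem monoidAlgebra_lift_mem_span_range {A : Type*} [CommSemiring K] [Monoid G] [Semiring A]
    [Algebra K A] (ρ : G →* A) (x : MonoidAlgebra K G) :
    MonoidAlgebra.lift K A G ρ x ∈ Submodule.span K (Set.range ρ) := by
  rw [MonoidAlgebra.lift_apply]
  exact Submodule.sum_mem _ fun g _ =>
    Submodule.smul_mem _ _ (Submodule.subset_span (Set.mem_range_self g))

variable [Field K] [Group G] [Finite G] [NeZero (Nat.card G : K)]

-- Maschke makes the representation a semisimple module, so Jacobson density applies.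
theorem exists_asAlgebraHom_eq_of_mem_centralizer_centralizer {V : Type*} [AddCommGroup V]
    [Module K V] [FiniteDimensional K V] (ρ : Representation K G V) {f : Module.End K V}
    (hf : f ∈ Set.centralizer (Set.centralizer (Set.range ρ))) :
    ∃ x : MonoidAlgebra K G, ρ.asAlgebraHom x = f := by
  let E := Module.End (MonoidAlgebra K G) ρ.asModule
  have restrictScalars_mem (φ : E) : φ.restrictScalars K ∈ Set.centralizer (Set.range ρ) := by
    rintro _ ⟨g, rfl⟩
    refine LinearMap.ext fun v : ρ.asModule => ?_
    have := φ.map_smul (MonoidAlgebra.single g 1) v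
    rw [Representation.single_smul, Representation.single_smul, one_smul, one_smul] at this
    exact this.symm
  let F : Module.End E ρ.asModule :=
    { f with map_smul' := fun φ v => (LinearMap.congr_fun (hf _ (restrictScalars_mem φ)) v).symm }
  have : Module.Finite E ρ.asModule := Module.Finite.of_restrictScalars_finite K E ρ.asModule
  have : IsSemisimpleModule (MonoidAlgebra K G) ρ.asModule := inferInstance
  obtain ⟨x, hx⟩ := Module.Finite.toModuleEnd_moduleEnd_surjective (R := MonoidAlgebra K G) F
  exact ⟨x, LinearMap.ext fun v => LinearMap.congr_fun hx v⟩

theorem matrix_centralizer_centralizer_range {n : Type*} [Fintype n] [DecidableEq n]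
    (ρ : G →* Matrix n n K) :
    Set.centralizer (Set.centralizer (Set.range ρ)) = Submodule.span K (Set.range ρ) := by
  let e : Matrix n n K ≃ₐ[K] Module.End K (n → K) := Matrix.toLinAlgEquiv'
  let σ : Representation K G (n → K) := (e : Matrix n n K →* _).comp ρ
  refine Set.Subset.antisymm (fun M hM => ?_) ?_
  · have e_symm_mem {T : Module.End K (n → K)} (hT : T ∈ Set.centralizer (Set.range σ)) :
        e.symm T ∈ Set.centralizer (Set.range ρ) := by
      rintro _ ⟨g, rfl⟩
      simpa [σ] using congrArg e.symm (hT (σ g) (Set.mem_range_self g))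
    have e_mem : e M ∈ Set.centralizer (Set.centralizer (Set.range σ)) := fun T hT => by
      simpa using congrArg e (hM _ (e_symm_mem hT))
    obtain ⟨x, hx⟩ := exists_asAlgebraHom_eq_of_mem_centralizer_centralizer σ e_mem
    have e_comp_lift : e.toAlgHom.comp (MonoidAlgebra.lift K _ G ρ) = σ.asAlgebraHom := by
      ext g : 2
      simp [σ]
    have : MonoidAlgebra.lift K _ G ρ x = M :=
      e.injective ((DFunLike.congr_fun e_comp_lift x).trans hx)
    exact this ▸ monoidAlgebra_lift_mem_span_range ρ x
  · exact span_subset_centralizer Set.subset_centralizer_centralizer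

end DoubleCommutant

section ZariskiDensity

open MvPolynomial

theorem eval_substitution_eq_zero_of_forall_mem_pi {σ τ R : Type*} [CommRing R] [IsDomain R]
    (q : τ → MvPolynomial σ R) {S : σ → Set R} (hS : ∀ i, (S i).Infinite) {p : MvPolynomial τ R}
    (h : ∀ x ∈ Set.pi Set.univ S, eval (fun t => eval x (q t)) p = 0) (x : σ → R) :
    eval (fun t => eval x (q t)) p = 0 := by
  have eval_bind₁ (y : σ → R) : eval y (bind₁ q p) = eval (fun t => eval y (q t)) p :=
    eval₂Hom_bind₁ _ _ _ _
  have : bind₁ q p = 0 := funext_set S hS fun y hy => by rw [eval_bind₁, h y hy, map_zero]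
  rw [← eval_bind₁, this, map_zero]

theorem infinite_unitary_complex : (unitary ℂ : Set ℂ).Infinite := by
  have sphere_subset : Metric.sphere (0 : ℂ) 1 ⊆ unitary ℂ := fun z hz => by
    have norm_eq_one : ‖z‖ = 1 := by simpa using hz
    simp [Unitary.mem_iff_star_mul_self, Complex.conj_mul', norm_eq_one]
  have nontrivial_sphere : (Metric.sphere (0 : ℂ) 1).Nontrivial :=
    ⟨1, by simp, -1, by simp, by norm_num⟩
  have isPreconnected_sphere : IsPreconnected (Metric.sphere (0 : ℂ) 1) :=
    isPreconnected_sphere (by simp) 0 1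
  exact (isPreconnected_sphere.infinite_of_nontrivial nontrivial_sphere).mono sphere_subset

variable {n : Type*} [Fintype n] [DecidableEq n]

theorem diagonal_mem_unitary {R : Type*} [Semiring R] [StarRing R] {d : n → R}
    (hd : ∀ i, d i ∈ unitary R) : Matrix.diagonal d ∈ unitary (Matrix n n R) := by
  simp only [Unitary.mem_iff] at hd
  simp [Unitary.mem_iff, Matrix.star_eq_conjTranspose, Matrix.diagonal_conjTranspose, hd]

variable {p : MvPolynomial (n × n) ℂ}

theorem eval_mul_diagonal_mul_eq_zero
    (hp : ∀ U ∈ unitary (Matrix n n ℂ), eval (fun x => U x.1 x.2) p = 0) {V W : Matrix n n ℂ}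
    (hV : V ∈ unitary (Matrix n n ℂ)) (hW : W ∈ unitary (Matrix n n ℂ)) (d : n → ℂ) :
    eval (fun x => (V * Matrix.diagonal d * W) x.1 x.2) p = 0 := by
  let q (x : n × n) : MvPolynomial n ℂ := ∑ l, C (V x.1 l) * X l * C (W l x.2)
  have eval_q (c : n → ℂ) (x : n × n) : eval c (q x) = (V * Matrix.diagonal c * W) x.1 x.2 := by
    rw [Matrix.mul_apply]
    simp [q, Matrix.mul_diagonal]
  have eval_unitary (c : n → ℂ) (hc : c ∈ Set.pi Set.univ fun _ => (unitary ℂ : Set ℂ)) :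
      eval (fun x => eval c (q x)) p = 0 := by
    simp only [eval_q]
    exact hp _ (mul_mem (mul_mem hV (diagonal_mem_unitary fun i => hc i trivial)) hW)
  simpa only [eval_q] using
    eval_substitution_eq_zero_of_forall_mem_pi q (fun _ => infinite_unitary_complex) eval_unitary d

theorem eval_isHermitian_eq_zero
    (hp : ∀ U ∈ unitary (Matrix n n ℂ), eval (fun x => U x.1 x.2) p = 0)
    {H : Matrix n n ℂ} (hH : H.IsHermitian) : eval (fun x => H x.1 x.2) p = 0 := by
  have hV := hH.eigenvectorUnitary.2
  rw [hH.spectral_theorem, Unitary.conjStarAlgAut_apply]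
  exact eval_mul_diagonal_mul_eq_zero hp hV (Unitary.star_mem hV) _

theorem eq_zero_of_eval_unitary_eq_zero
    (hp : ∀ U ∈ unitary (Matrix n n ℂ), eval (fun x => U x.1 x.2) p = 0) : p = 0 := by
  refine MvPolynomial.funext fun a => ?_
  let A : Matrix n n ℂ := fun i j => a (i, j)
  let B (z : ℂ) : Matrix n n ℂ := realPart A + z • imaginaryPart A
  let q (x : n × n) : MvPolynomial Unit ℂ :=
    C ((realPart A : Matrix n n ℂ) x.1 x.2) + X () * C ((imaginaryPart A : Matrix n n ℂ) x.1 x.2)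
  have eval_q (z : Unit → ℂ) (x : n × n) : eval z (q x) = B (z ()) x.1 x.2 := by
    simp [q, B]
  have isHermitian_ofReal (t : ℝ) : (B t).IsHermitian :=
    IsSelfAdjoint.add (realPart A).2 <|
      IsSelfAdjoint.smul (Complex.conj_ofReal t) (imaginaryPart A).2
  have eval_real (z : Unit → ℂ) (hz : z ∈ Set.pi Set.univ fun _ => Set.range Complex.ofReal) :
      eval (fun x => eval z (q x)) p = 0 := by
    obtain ⟨t, ht⟩ := hz () trivial
    simp only [eval_q, ← ht]
    exact eval_isHermitian_eq_zero hp (isHermitian_ofReal t)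
  have B_I : B Complex.I = A := realPart_add_I_smul_imaginaryPart A
  simpa [eval_q, B_I, A] using eval_substitution_eq_zero_of_forall_mem_pi q
    (fun _ => Set.infinite_range_of_injective Complex.ofReal_injective) eval_real
    (fun _ => Complex.I)

end ZariskiDensity

section PermutationOperators

variable {D k : ℕ}

theorem mul_permMatrix (T : Matrix (Fin k → Fin D) (Fin k → Fin D) ℂ) (g : Equiv.Perm (Fin k)) :
    T * permMatrix D g = T.submatrix id (· ∘ g) := by
  ext r c
  simp only [permMatrix, Matrix.mul_apply, mul_ite, mul_one, mul_zero, Finset.sum_ite_eq',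
    Finset.mem_univ, if_true]
  rfl

theorem permMatrix_mul (g : Equiv.Perm (Fin k)) (T : Matrix (Fin k → Fin D) (Fin k → Fin D) ℂ) :
    permMatrix D g * T = T.submatrix (· ∘ g.symm) id := by
  have (r c : Fin k → Fin D) : (r = fun a => c (g a)) ↔ r ∘ g.symm = c :=
    (Equiv.comp_symm_eq g c r).symm
  ext r c
  simp [permMatrix, Matrix.mul_apply, this]

theorem mem_centralizer_range_permMatrix_iff {T : Matrix (Fin k → Fin D) (Fin k → Fin D) ℂ} :
    T ∈ Set.centralizer (Set.range (permMatrix D)) ↔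
      ∀ (g : Equiv.Perm (Fin k)) r c, T (r ∘ g) (c ∘ g) = T r c := by
  simp only [Set.mem_centralizer_iff, Set.forall_mem_range, permMatrix_mul, mul_permMatrix]
  refine forall_congr' fun g => ⟨fun h r c => ?_, fun h => ?_⟩
  · simpa [Function.comp_assoc] using (congrFun₂ h (r ∘ g) c).symm
  · ext r c
    simpa [Function.comp_assoc] using (h (r ∘ g.symm) c).symm

/-- The permutation operators as a representation of `S_k`. The inverse is needed because
`P_D(g) P_D(h) = P_D(hg)`. -/
def permHom (D k : ℕ) :
    Equiv.Perm (Fin k) →* Matrix (Fin k → Fin D) (Fin k → Fin D) ℂ where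
  toFun g := permMatrix D g⁻¹
  map_one' := by
    rw [inv_one, ← one_mul (permMatrix D 1), mul_permMatrix]
    exact Matrix.submatrix_id_id 1
  map_mul' g h := by
    rw [mul_permMatrix, _root_.mul_inv_rev]
    rfl

theorem range_permHom : Set.range (permHom D k) = Set.range (permMatrix D) :=
  inv_surjective.range_comp (permMatrix D)

theorem centralizer_centralizer_range_permMatrix :
    Set.centralizer (Set.centralizer (Set.range (permMatrix D (k := k)))) =
      Submodule.span ℂ (Set.range (permMatrix D (k := k))) := by
  rw [← range_permHom]
  exact matrix_centralizer_centralizer_range (permHom D k)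

end PermutationOperators

section TensorPowers

open MvPolynomial

theorem exists_perm_comp_eq_of_sum_single_eq {ι α : Type*} [Fintype ι] {v w : ι → α}
    (h : ∑ a, Finsupp.single (v a) 1 = ∑ a, Finsupp.single (w a) (1 : ℕ)) :
    ∃ g : Equiv.Perm ι, v ∘ g = w := by
  classical
  have card_fiber_eq (x : α) : Fintype.card {a // w a = x} = Fintype.card {a // v a = x} := by
    have := DFunLike.congr_fun h x
    simp only [Finsupp.finsetSum_apply, Finsupp.single_apply, Finset.sum_boole] at this
    simpa [Fintype.card_subtype] using this.symm
  let e (x : α) : {a // w a = x} ≃ {a // v a = x} := Fintype.equivOfCardEq (card_fiber_eq x)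
  exact ⟨Equiv.ofFiberEquiv e, funext (Equiv.ofFiberEquiv_map e)⟩

variable {D k : ℕ}

/-- The exponent of the monomial `∏ₐ X (r a, c a)` in the entries of a matrix, for `x = (r, c)`. It
records the orbit of `(r, c)` under simultaneous permutation of the tensor factors. -/
noncomputable def entryExponent (x : (Fin k → Fin D) × (Fin k → Fin D)) : Fin D × Fin D →₀ ℕ :=
  ∑ a, Finsupp.single (x.1 a, x.2 a) 1

/-- The polynomial `A ↦ φ (A^{⊗k})` in the entries of a matrix `A`. -/
noncomputable def tensorPowPoly (φ : Module.Dual ℂ (Matrix (Fin k → Fin D) (Fin k → Fin D) ℂ)) :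
    MvPolynomial (Fin D × Fin D) ℂ :=
  ∑ x, monomial (entryExponent x) (φ (Matrix.single x.1 x.2 1))

theorem dual_apply_eq_sum {m n R : Type*} [Fintype m] [Fintype n] [DecidableEq m]
    [DecidableEq n] [CommSemiring R] (φ : Module.Dual R (Matrix m n R)) (T : Matrix m n R) :
    φ T = ∑ x : m × n, φ (Matrix.single x.1 x.2 1) * T x.1 x.2 := by
  have single_eq (i : m) (j : n) : Matrix.single i j (T i j) = T i j • Matrix.single i j 1 := by
    simp
  conv_lhs => rw [Matrix.matrix_eq_sum_single T]
  simp only [Fintype.sum_prod_type, single_eq, map_sum, map_smul, smul_eq_mul, mul_comm]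

variable {φ : Module.Dual ℂ (Matrix (Fin k → Fin D) (Fin k → Fin D) ℂ)}

theorem eval_tensorPowPoly (A : Matrix (Fin D) (Fin D) ℂ) :
    eval (fun x => A x.1 x.2) (tensorPowPoly φ) = φ (tensorPow A) := by
  have eval_monomial_entryExponent (x : (Fin k → Fin D) × (Fin k → Fin D)) (b : ℂ) :
      eval (fun y => A y.1 y.2) (monomial (entryExponent x) b) = b * tensorPow A x.1 x.2 := by
    rw [← mul_one b, ← C_mul_monomial, entryExponent, monomial_sum_one]
    simp [tensorPow, eval_monomial]
  simp only [tensorPowPoly, map_sum, eval_monomial_entryExponent, dual_apply_eq_sum φ (tensorPow A)]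

theorem factorsThrough_entryExponent {T : Matrix (Fin k → Fin D) (Fin k → Fin D) ℂ}
    (hT : T ∈ Set.centralizer (Set.range (permMatrix D))) :
    Function.FactorsThrough (Function.uncurry T) entryExponent := by
  intro x y hxy
  obtain ⟨g, hg⟩ := exists_perm_comp_eq_of_sum_single_eq hxy
  have fst_comp : x.1 ∘ g = y.1 := congrArg (Prod.fst ∘ ·) hg
  have snd_comp : x.2 ∘ g = y.2 := congrArg (Prod.snd ∘ ·) hg
  have := mem_centralizer_range_permMatrix_iff.1 hT g x.1 x.2
  rw [fst_comp, snd_comp] at this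
  exact this.symm

theorem exists_linearMap_monomial_eq {σ R : Type*} [CommSemiring R] (t : (σ →₀ ℕ) → R) :
    ∃ L : MvPolynomial σ R →ₗ[R] R, ∀ s b, L (monomial s b) = b * t s := by
  refine ⟨(basisMonomials σ R).constr R t, fun s b => ?_⟩
  have monomial_eq_smul : monomial s b = b • basisMonomials σ R s := by
    rw [coe_basisMonomials, smul_monomial, smul_eq_mul, mul_one]
  rw [monomial_eq_smul, map_smul, Module.Basis.constr_basis, smul_eq_mul]

theorem dual_apply_eq_zero_of_tensorPowPoly_eq_zero (hφ : tensorPowPoly φ = 0)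
    {T : Matrix (Fin k → Fin D) (Fin k → Fin D) ℂ}
    (hT : T ∈ Set.centralizer (Set.range (permMatrix D))) : φ T = 0 := by
  let t : (Fin D × Fin D →₀ ℕ) → ℂ := Function.extend entryExponent (Function.uncurry T) 0
  have t_entryExponent (x) : t (entryExponent x) = T x.1 x.2 :=
    (factorsThrough_entryExponent hT).extend_apply 0 x
  obtain ⟨L, L_monomial⟩ := exists_linearMap_monomial_eq t
  have L_tensorPowPoly : L (tensorPowPoly φ) = φ T := by
    simp only [tensorPowPoly, map_sum, L_monomial, t_entryExponent, dual_apply_eq_sum φ T]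
  rw [← L_tensorPowPoly, hφ, map_zero]

theorem tensorPow_mem_centralizer_range_permMatrix (A : Matrix (Fin D) (Fin D) ℂ) :
    tensorPow A ∈ Set.centralizer (Set.range (permMatrix D (k := k))) :=
  mem_centralizer_range_permMatrix_iff.2 fun g r c =>
    Equiv.prod_comp g fun a => A (r a) (c a)

theorem centralizer_range_permMatrix :
    Set.centralizer (Set.range (permMatrix D (k := k))) =
      Submodule.span ℂ (tensorPow (k := k) ''
        (unitary (Matrix (Fin D) (Fin D) ℂ) : Set (Matrix (Fin D) (Fin D) ℂ))) := by
  refine Set.Subset.antisymm (fun T hT => ?_) (span_subset_centralizer ?_)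
  · by_contra T_notMem
    obtain ⟨φ, φ_T_ne_zero, hφ⟩ := Submodule.exists_le_ker_of_notMem T_notMem
    refine φ_T_ne_zero (dual_apply_eq_zero_of_tensorPowPoly_eq_zero ?_ hT)
    refine eq_zero_of_eval_unitary_eq_zero fun U hU => ?_
    rw [eval_tensorPowPoly]
    exact hφ (Submodule.subset_span ⟨U, hU, rfl⟩)
  · rintro _ ⟨U, -, rfl⟩
    exact tensorPow_mem_centralizer_range_permMatrix U

end TensorPowers

/-- Schur–Weyl duality for the commutant of the diagonal unitary action: an operator `M` on
`(ℂ^D)^{⊗k}` commutes with `U^{⊗k}` for every unitary `U ∈ U(D)` if and only if `M` lies in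
the complex linear span of the permutation operators `{P_D(g) : g ∈ S_k}`. -/
theorem schurWeyl_commutant (D k : ℕ) (hD : 1 ≤ D) (hk : 1 ≤ k)
    (M : Matrix (Fin k → Fin D) (Fin k → Fin D) ℂ) :
    (∀ U : Matrix (Fin D) (Fin D) ℂ, U ∈ unitary (Matrix (Fin D) (Fin D) ℂ) →
        tensorPow (k := k) U * M = M * tensorPow (k := k) U)
    ↔ M ∈ Submodule.span ℂ (Set.range (permMatrix D (k := k))) := by
  have commutes_iff : (∀ U ∈ unitary (Matrix (Fin D) (Fin D) ℂ),
      tensorPow (k := k) U * M = M * tensorPow U) ↔ M ∈ Set.centralizer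
        (tensorPow '' (unitary (Matrix (Fin D) (Fin D) ℂ) : Set (Matrix (Fin D) (Fin D) ℂ))) :=
    (Set.forall_mem_image (p := fun T => T * M = M * T)).symm
  rw [commutes_iff, ← centralizer_span ℂ, ← centralizer_range_permMatrix,
    centralizer_centralizer_range_permMatrix, SetLike.mem_coe]
end

section
/- Let d ≥ 2 and N ≥ 2 be integers, and let 𝒢 be a nonempty subset of the set DU(d²) of dual-unitary two-qudit gates that is open in the subspace topology of DU(d²) inside U(d²). Then 𝒢 is brick-wall universal: the set of all finite products of brick-wall layers on N qudits with open boundary conditions — where each layer is a tensor product of gates from 𝒢 applied either to the site pairs (1,2),(3,4),… or to the site pairs (2,3),(4,5),…, with the identity on any unpaired boundary sites — is dense in the unitary group U(d^N). -/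
open Matrix

/-- The reshuffled matrix `Ũ` of a two-qudit gate `U`, exchanging the roles of space and
time on one leg: `Ũ_{(c,a),(e,b)} := U_{(a,b),(c,e)}`. -/
def reshuffle {d : ℕ} (U : Matrix (Fin d × Fin d) (Fin d × Fin d) ℂ) :
    Matrix (Fin d × Fin d) (Fin d × Fin d) ℂ :=
  fun p q => U (p.2, q.2) (p.1, q.1)

/-- The set `DU(d²)` of dual-unitary two-qudit gates: those `U ∈ U(d²)` whose reshuffling
`Ũ` is also unitary. -/
def DualUnitary (d : ℕ) : Set (Matrix (Fin d × Fin d) (Fin d × Fin d) ℂ) :=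
  {U | U ∈ unitary (Matrix (Fin d × Fin d) (Fin d × Fin d) ℂ) ∧
    reshuffle U ∈ unitary (Matrix (Fin d × Fin d) (Fin d × Fin d) ℂ)}

/-- The pairs of sites `(1,2), (3,4), …` (0-indexed: `(0,1), (2,3), …`) of an "even"
brick-wall layer on `N` sites. -/
def evenPairs (N : ℕ) : Finset (Fin N × Fin N) :=
  Finset.univ.filter (fun p => (p.1 : ℕ) % 2 = 0 ∧ (p.2 : ℕ) = (p.1 : ℕ) + 1)

/-- The pairs of sites `(2,3), (4,5), …` (0-indexed: `(1,2), (3,4), …`) of an "odd"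
brick-wall layer on `N` sites. -/
def oddPairs (N : ℕ) : Finset (Fin N × Fin N) :=
  Finset.univ.filter (fun p => (p.1 : ℕ) % 2 = 1 ∧ (p.2 : ℕ) = (p.1 : ℕ) + 1)

/-- The matrix on `(ℂ^d)^{⊗N}` of a layer consisting of the two-qudit gates `u p` applied to
the disjoint site pairs `p ∈ P`, with the identity on all unpaired sites. -/
def layerMatrix (d N : ℕ) (P : Finset (Fin N × Fin N))
    (u : Fin N × Fin N → Matrix (Fin d × Fin d) (Fin d × Fin d) ℂ) :
    Matrix (Fin N → Fin d) (Fin N → Fin d) ℂ :=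
  fun r c =>
    (∏ p ∈ P, u p (r p.1, r p.2) (c p.1, c p.2)) *
      ∏ s ∈ Finset.univ.filter (fun s : Fin N => ∀ p ∈ P, s ≠ p.1 ∧ s ≠ p.2),
        (if r s = c s then 1 else 0)

/-- The set of all finite products of brick-wall layers on `N` qudits (open boundary
conditions) with gates drawn from `G`, each layer being either an "even" layer on the pairs
`(1,2),(3,4),…` or an "odd" layer on the pairs `(2,3),(4,5),…`. -/
def BrickCircuits (d N : ℕ) (G : Set (Matrix (Fin d × Fin d) (Fin d × Fin d) ℂ)) :
    Set (Matrix (Fin N → Fin d) (Fin N → Fin d) ℂ) :=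
  {M | ∃ L : List (Matrix (Fin N → Fin d) (Fin N → Fin d) ℂ),
    (∀ A ∈ L, ∃ u : Fin N × Fin N → Matrix (Fin d × Fin d) (Fin d × Fin d) ℂ,
      ((∀ p ∈ evenPairs N, u p ∈ G) ∧ A = layerMatrix d N (evenPairs N) u) ∨
      ((∀ p ∈ oddPairs N, u p ∈ G) ∧ A = layerMatrix d N (oddPairs N) u)) ∧
    M = L.prod}

/-!
The closure of the monoid of circuits is a compact semigroup of unitaries, hence a closed group, and
it contains all unitaries as soon as its complexified Lie algebra `L` consists of all matrices.

Replacing a gate `g` of a layer by `v * g` and dividing by the original layer yields `v` on a single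
pair of sites. Multiplying by one-site unitaries preserves dual-unitarity and `G` is relatively
open, so `v` may be any one-site unitary near `1`, and `L` contains all one-site operators.

On a pair of sites, a Lie algebra containing the one-site operators either is everything or consists
of operators `A ⊗ 1 + 1 ⊗ B`. Since `L` is stable under conjugation by `g`, in the second case
`g (x ⊗ 1) g⋆ = A ⊗ 1 + 1 ⊗ B`. Dual-unitarity of `g` says that the partial trace of the left side
over the second site is always a scalar, so `A` is a scalar: conjugation by `g` moves each site to
the other one. Such a gate remains dual-unitary when multiplied by any diagonal matrix of phases,
but a phase on one basis vector destroys the property. Hence `G` contains a gate without it, and `L`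
contains all operators on adjacent pairs of sites.

Along the chain one adds one site at a time: bracketing with the operators on either factor turns a
single `x ⊗ y` with `x` and `y` not scalar into all operators of the form `x' ⊗ y'`.
-/

attribute [local instance] LieRing.ofAssociativeRing

section LieSubspaces
open Kronecker

lemma eq_top_of_forall_kronecker_mem {R m n : Type*} [CommRing R] [Finite m] [Finite n]
    {L : Submodule R (Matrix (m × n) (m × n) R)} (h : ∀ x y, x ⊗ₖ y ∈ L) : L = ⊤ := by
  classical
  cases nonempty_fintype m
  cases nonempty_fintype n
  refine eq_top_iff.2 fun w _ => ?_
  rw [matrix_eq_sum_single w]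
  refine L.sum_mem fun r _ => L.sum_mem fun c _ => ?_
  rw [← mul_one (w r c), ← single_kronecker_single r.1 c.1 r.2 c.2]
  exact h _ _

variable {R : Type*} [CommRing R]
  {m n : Type*} [Fintype m] [DecidableEq m] [Fintype n] [DecidableEq n]

lemma kronecker_one_lie_kronecker (a x : Matrix m m R) (y : Matrix n n R) :
    ⁅a ⊗ₖ (1 : Matrix n n R), x ⊗ₖ y⁆ = ⁅a, x⁆ ⊗ₖ y := by
  ext
  simp [Ring.lie_def, ← mul_kronecker_mul, sub_mul]

lemma one_kronecker_lie_kronecker (b y : Matrix n n R) (x : Matrix m m R) :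
    ⁅(1 : Matrix m m R) ⊗ₖ b, x ⊗ₖ y⁆ = x ⊗ₖ ⁅b, y⁆ := by
  ext
  simp [Ring.lie_def, ← mul_kronecker_mul, mul_sub]

variable {K : Type*} [Field K] [CharZero K]

lemma mul_mul_mem_of_lie_mem {A : Type*} [Ring A] [Algebra K A] {L : Submodule K A} {e f w : A}
    (hee : IsIdempotentElem e) (hef : e * f = 0) (hfe : f * e = 0)
    (he : ∀ x ∈ L, ⁅e, x⁆ ∈ L) (hf : ∀ x ∈ L, ⁅f, x⁆ ∈ L) (hw : w ∈ L) :
    e * w * f ∈ L := by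
  have hff : ⁅f, ⁅e, w⁆⁆ = -(e * w * f + f * w * e) := by
    simp only [Ring.lie_def, mul_sub, sub_mul, ← mul_assoc, hfe, zero_mul]
    simp only [mul_assoc, hef, mul_zero]
    abel
  have hsum : e * w * f + f * w * e ∈ L := by
    simpa only [hff, neg_neg] using L.neg_mem (hf _ (he _ hw))
  have hdiff : ⁅e, e * w * f + f * w * e⁆ = e * w * f - f * w * e := by
    simp only [Ring.lie_def, mul_add, add_mul, ← mul_assoc, hee.eq, hef, zero_mul]
    simp only [mul_assoc, hee.eq, hfe, mul_zero]
    abel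
  have htwo : (2 : K) • (e * w * f) ∈ L := by
    have := L.add_mem hsum (hdiff ▸ he _ hsum)
    rwa [add_add_sub_cancel, ← two_smul K] at this
  exact (L.smul_mem_iff two_ne_zero).1 htwo

lemma single_row_mem_lieIdeal {T : LieIdeal K (Matrix n n K)} {i j : n} (hij : i ≠ j)
    (h : single i j (1 : K) ∈ T) {l : n} (hl : l ≠ j) : single j l (1 : K) ∈ T := by
  have hD : single i i (1 : K) - single j j 1 ∈ T := by
    simpa [Ring.lie_def] using T.neg_mem (lie_mem_right K _ T (single j i 1) _ h)
  have hjl := lie_mem_right K _ T (single j l 1) _ hD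
  rcases eq_or_ne l i with rfl | hli
  · have htwo : ⁅single j l (1 : K), single l l (1 : K) - single j j 1⁆
        = (2 : K) • single j l (1 : K) := by
      simp [Ring.lie_def, mul_sub, sub_mul, single_mul_single_of_ne, hij, two_smul,
        one_add_one_eq_two, ← single_add]
    exact (T.toSubmodule.smul_mem_iff two_ne_zero).1 (htwo ▸ hjl)
  · simpa [Ring.lie_def, mul_sub, sub_mul, single_mul_single_of_ne, hl, hli, hij] using hjl

lemma single_mem_lieIdeal {T : LieIdeal K (Matrix n n K)} {i j : n} (hij : i ≠ j)
    (h : single i j (1 : K) ∈ T) {k l : n} (hkl : k ≠ l) : single k l (1 : K) ∈ T := by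
  have hji := single_row_mem_lieIdeal hij h hij
  rcases eq_or_ne k j with rfl | hkj
  · exact single_row_mem_lieIdeal hij h hkl.symm
  · exact single_row_mem_lieIdeal hkj.symm (single_row_mem_lieIdeal hij h hkj) hkl.symm

lemma lieIdeal_matrix_eq_top_of_single_mem {T : LieIdeal K (Matrix n n K)} (h1 : 1 ∈ T) {i j : n}
    (hij : i ≠ j) (h : single i j (1 : K) ∈ T) : T = ⊤ := by
  have hoff : ∀ k l, k ≠ l → single k l (1 : K) ∈ T := fun k l => single_mem_lieIdeal hij h
  have hdiff : ∀ k l, single k k (1 : K) - single l l 1 ∈ T := fun k l => by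
    rcases eq_or_ne k l with rfl | hkl
    · simp
    · simpa [Ring.lie_def] using lie_mem_right K _ T (single k l 1) _ (hoff l k hkl.symm)
  have hdiag : ∀ k, single k k (1 : K) ∈ T := fun k => by
    have hsum := T.add_mem (T.toSubmodule.sum_mem fun l (_ : l ∈ Finset.univ) => hdiff k l) h1
    rw [Finset.sum_sub_distrib, sum_single_one, sub_add_cancel, Finset.sum_const,
      ← Nat.cast_smul_eq_nsmul K] at hsum
    have : Nonempty n := ⟨i⟩
    exact (T.toSubmodule.smul_mem_iff (by simp)).1 hsum
  refine eq_top_iff.2 fun x _ => ?_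
  rw [matrix_eq_sum_single x]
  refine T.toSubmodule.sum_mem fun k _ => T.toSubmodule.sum_mem fun l _ => ?_
  rw [← mul_one (x k l), ← smul_eq_mul, ← smul_single]
  refine T.toSubmodule.smul_mem _ ?_
  rcases eq_or_ne k l with rfl | hkl
  exacts [hdiag k, hoff k l hkl]

lemma lieIdeal_matrix_eq_top {T : LieIdeal K (Matrix n n K)} (h1 : 1 ∈ T) {y : Matrix n n K}
    (hy : y ∈ T) (hns : y ∉ Set.range (scalar n)) : T = ⊤ := by
  by_contra htop
  have hoff : ∀ z ∈ T, ∀ i j, i ≠ j → z i j = 0 := by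
    intro z hz i j hij
    by_contra hne
    have hcorner := mul_mul_mem_of_lie_mem (L := T.toSubmodule) (e := single i i (1 : K))
      (f := single j j 1) (by simp [IsIdempotentElem]) (by simp [single_mul_single_of_ne, hij])
      (by simp [single_mul_single_of_ne, hij.symm]) (fun _ => lie_mem_right K _ T _ _)
      (fun _ => lie_mem_right K _ T _ _) hz
    rw [single_mul_mul_single, one_mul, mul_one, ← mul_one (z i j), ← smul_eq_mul, ← smul_single]
      at hcorner
    exact htop (lieIdeal_matrix_eq_top_of_single_mem h1 hij
      ((T.toSubmodule.smul_mem_iff hne).1 hcorner))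
  refine hns (mem_range_scalar_of_commute_single fun i j hij => sub_eq_zero.1 ?_)
  ext k l
  by_cases hkl : k = l
  · subst hkl
    by_cases hki : k = i
    · subst hki
      simp [hoff y hy j k hij.symm, mul_single_apply_of_ne, hij]
    · by_cases hkj : k = j
      · subst hkj
        simp [hoff y hy k i hki, hki]
      · simp [hki, hkj]
  · exact hoff _ (lie_mem_right K _ T (single i j 1) y hy) k l hkl

lemma lieSubalgebra_kronecker_eq_top {L : LieSubalgebra K (Matrix (m × n) (m × n) K)}
    (hL : ∀ a, a ⊗ₖ 1 ∈ L) (hR : ∀ b, 1 ⊗ₖ b ∈ L) {x : Matrix m m K} {y : Matrix n n K}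
    (hxy : x ⊗ₖ y ∈ L) (hx : x ∉ Set.range (scalar m)) (hy : y ∉ Set.range (scalar n)) :
    L = ⊤ := by
  let T : LieIdeal K (Matrix n n K) :=
    { L.toSubmodule.comap (kroneckerBilinear (R := K) (α := K) x) with
      lie_mem := fun {b y'} hy' => show x ⊗ₖ ⁅b, y'⁆ ∈ L from
        one_kronecker_lie_kronecker b y' x ▸ L.lie_mem (hR b) hy' }
  have hT : T = ⊤ := lieIdeal_matrix_eq_top (hL x) (y := y) hxy hy
  have hfix : ∀ y', x ⊗ₖ y' ∈ L := fun y' => (hT ▸ LieSubmodule.mem_top y' : y' ∈ T)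
  refine LieSubalgebra.toSubmodule_injective (eq_top_of_forall_kronecker_mem fun x' y' => ?_)
  let S : LieIdeal K (Matrix m m K) :=
    { L.toSubmodule.comap ((kroneckerBilinear (R := K) (α := K)).flip y') with
      lie_mem := fun {a z} hz => show ⁅a, z⁆ ⊗ₖ y' ∈ L from
        kronecker_one_lie_kronecker a z y' ▸ L.lie_mem (hL a) hz }
  have hS : S = ⊤ := lieIdeal_matrix_eq_top (hR y') (y := x) (hfix y') hx
  exact (hS ▸ LieSubmodule.mem_top x' : x' ∈ S)

lemma single_kronecker_block_mem {L : LieSubalgebra K (Matrix (m × n) (m × n) K)}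
    (hL : ∀ a, a ⊗ₖ 1 ∈ L) {W : Matrix (m × n) (m × n) K} (hW : W ∈ L) {i j : m} (hij : i ≠ j) :
    single i j (1 : K) ⊗ₖ W.submatrix (Prod.mk i) (Prod.mk j) ∈ L := by
  have hcorner : _ ∈ L := mul_mul_mem_of_lie_mem (L := L.toSubmodule)
    (e := single i i (1 : K) ⊗ₖ (1 : Matrix n n K)) (f := single j j (1 : K) ⊗ₖ (1 : Matrix n n K))
    (by simp [IsIdempotentElem, ← mul_kronecker_mul])
    (by simp [← mul_kronecker_mul, single_mul_single_of_ne, hij])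
    (by simp [← mul_kronecker_mul, single_mul_single_of_ne, hij.symm])
    (fun _ => L.lie_mem (hL _)) (fun _ => L.lie_mem (hL _)) hW
  convert hcorner using 1
  ext ⟨a, k⟩ ⟨b, l⟩
  by_cases ha : i = a <;> by_cases hb : j = b <;>
    simp [mul_apply, Fintype.sum_prod_type, single_apply, one_apply, ha, hb]

lemma eq_top_or_exists_eq_kronecker_add {L : LieSubalgebra K (Matrix (m × n) (m × n) K)}
    (hL : ∀ a, a ⊗ₖ 1 ∈ L) (hR : ∀ b, 1 ⊗ₖ b ∈ L) :
    L = ⊤ ∨ ∀ W ∈ L, ∃ A B, W = A ⊗ₖ 1 + 1 ⊗ₖ B := by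
  by_cases htop : L = ⊤
  · exact .inl htop
  refine .inr fun W hW => ?_
  have hoff : ∀ V ∈ L, ∀ i j, i ≠ j →
      ∃ z, scalar n z = V.submatrix (Prod.mk i) (Prod.mk j) := by
    intro V hV i j hij
    by_contra hns
    refine htop (lieSubalgebra_kronecker_eq_top hL hR (single_kronecker_block_mem hL hV hij) ?_ hns)
    rintro ⟨z, hz⟩
    simpa [hij] using congrFun₂ hz i j
  rcases isEmpty_or_nonempty m with hm | ⟨⟨o⟩⟩
  · exact ⟨0, 0, by ext i; exact hm.elim i.1⟩
  have hdiag : ∀ i, ∃ z, scalar n z =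
      W.submatrix (Prod.mk i) (Prod.mk i) - W.submatrix (Prod.mk o) (Prod.mk o) := by
    intro i
    rcases eq_or_ne i o with rfl | hio
    · exact ⟨0, by simp⟩
    obtain ⟨z, hz⟩ := hoff _ (L.lie_mem (hL (single o i 1)) hW) o i hio.symm
    refine ⟨z, hz.trans ?_⟩
    ext k l
    simp [Ring.lie_def, mul_apply, Fintype.sum_prod_type, single_apply, one_apply]
  choose c hc using hdiag
  choose z hz using hoff W hW
  refine ⟨of fun i j => if h : i = j then c i else z i j h, W.submatrix (Prod.mk o) (Prod.mk o), ?_⟩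
  ext ⟨i, k⟩ ⟨j, l⟩
  by_cases h : i = j
  · subst h
    have := congrFun₂ (hc i) k l
    simp_all [one_apply, diagonal_apply]
  · have := congrFun₂ (hz i j h) k l
    simp_all [one_apply, diagonal_apply]

end LieSubspaces

section Sites

variable {ι : Type*} [Fintype ι]

/-- The tensor product of a family of matrices, acting on the functions that pick one index for
each factor. -/
def piKronecker {R : Type*} [CommMonoid R] {m n : ι → Type*} (x : ∀ i, Matrix (m i) (n i) R) :
    Matrix (∀ i, m i) (∀ i, n i) R :=
  of fun r c => ∏ i, x i (r i) (c i)

lemma piKronecker_mul {R : Type*} [CommSemiring R] {l m n : ι → Type*} [DecidableEq ι]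
    [∀ i, Fintype (m i)] (x : ∀ i, Matrix (l i) (m i) R) (y : ∀ i, Matrix (m i) (n i) R) :
    piKronecker x * piKronecker y = piKronecker fun i => x i * y i := by
  ext r c
  simp only [piKronecker, mul_apply, of_apply, ← Finset.prod_mul_distrib]
  rw [Finset.prod_univ_sum, Fintype.piFinset_univ]

lemma piKronecker_one {R : Type*} [CommSemiring R] {m : ι → Type*} [∀ i, DecidableEq (m i)]
    [DecidableEq (∀ i, m i)] : piKronecker (fun i => (1 : Matrix (m i) (m i) R)) = 1 := by
  ext r c
  simp [piKronecker, one_apply, Finset.prod_ite_zero, funext_iff]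

lemma star_piKronecker {R : Type*} [CommSemiring R] [StarRing R] {m : ι → Type*}
    (x : ∀ i, Matrix (m i) (m i) R) : star (piKronecker x) = piKronecker (star x) := by
  ext r c
  simp [piKronecker, star_apply]

lemma piKronecker_mem_unitary {R : Type*} [CommRing R] [StarRing R] {m : ι → Type*}
    [DecidableEq ι] [∀ i, Fintype (m i)] [∀ i, DecidableEq (m i)] {u : ∀ i, Matrix (m i) (m i) R}
    (hu : ∀ i, u i ∈ unitary (Matrix (m i) (m i) R)) :
    piKronecker u ∈ unitary (Matrix (∀ i, m i) (∀ i, m i) R) := by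
  refine mem_unitaryGroup_iff.2 ?_
  rw [star_piKronecker, piKronecker_mul, ← piKronecker_one]
  exact congrArg piKronecker (funext fun i => Unitary.mul_star_self_of_mem (hu i))

variable [DecidableEq ι] {R : Type*} [CommRing R]
  {m : ι → Type*} [∀ i, DecidableEq (m i)]

/-- The operator acting as `a` on the tensor factor `s` and trivially on all others. -/
def siteOp (s : ι) (a : Matrix (m s) (m s) R) : Matrix (∀ i, m i) (∀ i, m i) R :=
  piKronecker (Pi.mulSingle s a)

lemma siteOp_update_apply (s : ι) (a : Matrix (m s) (m s) R) (f : ∀ i, m i) (k l : m s) :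
    siteOp s a (Function.update f s k) (Function.update f s l) = a k l := by
  have h : ∀ i ≠ s, (Pi.mulSingle s a : ∀ i, Matrix (m i) (m i) R) i
      (Function.update f s k i) (Function.update f s l i) = 1 := fun i hi => by simp [hi]
  simp [siteOp, piKronecker, Fintype.prod_eq_single s h]

lemma siteOp_apply (s : ι) (a : Matrix (m s) (m s) R) (r c : ∀ i, m i) :
    siteOp s a r c = a (r s) (c s) *
      ∏ i ∈ Finset.univ.erase s, (1 : Matrix (m i) (m i) R) (r i) (c i) := by
  rw [siteOp, piKronecker, of_apply, ← Finset.mul_prod_erase _ _ (Finset.mem_univ s),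
    Pi.mulSingle_eq_same]
  congr 1
  exact Finset.prod_congr rfl fun i hi => by rw [Pi.mulSingle_eq_of_ne (Finset.ne_of_mem_erase hi)]

lemma siteOp_one (s : ι) : siteOp s (1 : Matrix (m s) (m s) R) = 1 := by
  rw [siteOp, Pi.mulSingle_one]
  exact piKronecker_one

lemma siteOp_smul (s : ι) (z : R) (a : Matrix (m s) (m s) R) :
    siteOp s (z • a) = z • siteOp s a := by
  ext
  simp [siteOp_apply, mul_assoc]

variable [∀ i, Fintype (m i)]

lemma siteOp_mul (s : ι) (a b : Matrix (m s) (m s) R) :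
    siteOp s (a * b) = siteOp s a * siteOp s b := by
  rw [siteOp, siteOp, siteOp, piKronecker_mul, Pi.mulSingle_mul]
  rfl

lemma siteOp_notMem_range_scalar {s : ι} {a : Matrix (m s) (m s) R} (f : ∀ i, m i)
    (ha : a ∉ Set.range (scalar (m s))) : siteOp s a ∉ Set.range (scalar (∀ i, m i)) := by
  rintro ⟨z, hz⟩
  refine ha ⟨z, ?_⟩
  ext k l
  rw [← siteOp_update_apply s a f, ← hz]
  by_cases h : k = l <;> simp [h, (Function.update_injective f s).eq_iff]

/-- `siteOp s` as a homomorphism of star algebras. -/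
def siteHom [StarRing R] (s : ι) :
    Matrix (m s) (m s) R →⋆ₐ[R] Matrix (∀ i, m i) (∀ i, m i) R where
  toFun := siteOp s
  map_one' := siteOp_one s
  map_mul' := siteOp_mul s
  map_zero' := by ext; simp [siteOp_apply]
  map_add' a b := by ext; simp [siteOp_apply, add_mul]
  commutes' z := by
    simp only [Algebra.algebraMap_eq_smul_one, siteOp_smul, siteOp_one]
  map_star' a := by
    rw [siteOp, siteOp, star_piKronecker]
    congr 1
    ext i : 1
    by_cases h : i = s
    · subst h; simp
    · simp [h]

lemma piKronecker_conj_siteOp [StarRing R] {u : ∀ i, Matrix (m i) (m i) R}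
    (hu : ∀ i, u i ∈ unitary (Matrix (m i) (m i) R)) (s : ι) (a : Matrix (m s) (m s) R) :
    piKronecker u * siteOp s a * star (piKronecker u) = siteOp s (u s * a * star (u s)) := by
  rw [star_piKronecker, siteOp, siteOp, piKronecker_mul, piKronecker_mul]
  congr 1
  ext i : 1
  by_cases h : i = s
  · subst h; simp
  · simp [h, Unitary.mul_star_self_of_mem (hu i)]

end Sites

section Chain
open Kronecker

variable {R κ : Type*} [CommRing R] [Fintype κ] [DecidableEq κ]

lemma reindex_consEquiv_kronecker_piKronecker {n : ℕ} (a : Matrix κ κ R)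
    (x : Fin n → Matrix κ κ R) :
    reindexAlgEquiv R R (Fin.consEquiv fun _ : Fin (n + 1) => κ) (a ⊗ₖ piKronecker x)
      = piKronecker (Fin.cons (α := fun _ => Matrix κ κ R) a x) := by
  ext r c
  simp [piKronecker, Fin.prod_univ_succ, Fin.tail]

lemma reindex_consEquiv_kronecker_one {n : ℕ} (a : Matrix κ κ R) :
    reindexAlgEquiv R R (Fin.consEquiv fun _ : Fin (n + 1) => κ) (a ⊗ₖ 1) = siteOp 0 a := by
  rw [← piKronecker_one, reindex_consEquiv_kronecker_piKronecker, siteOp]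
  congr 1
  ext i : 1
  cases i using Fin.cases <;> simp

lemma reindex_consEquiv_kronecker_siteOp {n : ℕ} (a b : Matrix κ κ R) (s : Fin n) :
    reindexAlgEquiv R R (Fin.consEquiv fun _ : Fin (n + 1) => κ) (a ⊗ₖ siteOp s b)
      = siteOp 0 a * siteOp s.succ b := by
  rw [siteOp, reindex_consEquiv_kronecker_piKronecker, siteOp, siteOp, piKronecker_mul]
  congr 1
  ext i : 1
  cases i using Fin.cases with
  | zero => simp
  | succ i => simp [Pi.mulSingle_apply]

lemma lieSubalgebra_chain_eq_top {K : Type*} [Field K] [CharZero K] {n : ℕ}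
    {L : LieSubalgebra K (Matrix (Fin (n + 1) → κ) (Fin (n + 1) → κ) K)}
    (hsite : ∀ s (a : Matrix κ κ K), siteOp s a ∈ L)
    (hpair : ∀ i : Fin n, ∃ x y : Matrix κ κ K, x ∉ Set.range (scalar κ) ∧
      y ∉ Set.range (scalar κ) ∧ siteOp i.castSucc x * siteOp i.succ y ∈ L) :
    L = ⊤ := by
  induction n with
  | zero =>
    refine eq_top_iff.2 fun X _ => ?_
    have hconst : ∀ r : Fin 1 → κ, (fun _ => r 0) = r := fun r =>
      funext fun i => congrArg r (Subsingleton.elim _ _)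
    convert hsite 0 (X.submatrix (fun k _ => k) fun k _ => k)
    ext r c
    simp [siteOp, piKronecker, hconst]
  | succ n ih =>
    set φ := reindexAlgEquiv K K (Fin.consEquiv fun _ : Fin (n + 2) => κ)
    let L' : LieSubalgebra K (Matrix (κ × (Fin (n + 1) → κ)) (κ × (Fin (n + 1) → κ)) K) :=
      L.comap φ.toAlgHom.toLieHom
    let M : LieSubalgebra K (Matrix (Fin (n + 1) → κ) (Fin (n + 1) → κ) K) :=
      { L'.toSubmodule.comap (kroneckerBilinear (R := K) (α := K) 1) with
        lie_mem' := fun {Y Z} hY hZ =>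
          show (1 : Matrix κ κ K) ⊗ₖ ⁅Y, Z⁆ ∈ L' from
            one_kronecker_lie_kronecker Y Z (1 : Matrix κ κ K) ▸ L'.lie_mem hY hZ }
    have hfirst : ∀ a : Matrix κ κ K, a ⊗ₖ 1 ∈ L' := fun a =>
      show φ (a ⊗ₖ 1) ∈ L from reindex_consEquiv_kronecker_one a ▸ hsite 0 a
    have hone : ∀ s (b : Matrix κ κ K), φ (1 ⊗ₖ siteOp s b) = siteOp s.succ b := fun s b => by
      rw [reindex_consEquiv_kronecker_siteOp, siteOp_one, one_mul]
    have hM : M = ⊤ := by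
      refine ih (fun s a => show φ (1 ⊗ₖ siteOp s a) ∈ L from hone s a ▸ hsite s.succ a) fun i => ?_
      obtain ⟨x, y, hx, hy, hxy⟩ := hpair i.succ
      refine ⟨x, y, hx, hy, show φ (1 ⊗ₖ (siteOp i.castSucc x * siteOp i.succ y)) ∈ L from ?_⟩
      rwa [← one_mul (1 : Matrix κ κ K), mul_kronecker_mul, map_mul, hone, hone, Fin.succ_castSucc]
    have hrest : ∀ Y, 1 ⊗ₖ Y ∈ L' := fun Y => (hM ▸ LieSubalgebra.mem_top Y : Y ∈ M)
    obtain ⟨x, y, hx, hy, hxy⟩ := hpair 0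
    have : Nonempty κ := not_isEmpty_iff.1 fun _ => hx ⟨0, Subsingleton.elim _ _⟩
    have hxy' : x ⊗ₖ siteOp 0 y ∈ L' :=
      show φ (x ⊗ₖ siteOp 0 y) ∈ L from
        reindex_consEquiv_kronecker_siteOp x y (0 : Fin (n + 1)) ▸ hxy
    have hL' : L' = ⊤ := lieSubalgebra_kronecker_eq_top hfirst hrest hxy' hx
      (siteOp_notMem_range_scalar (fun _ => Classical.arbitrary κ) hy)
    refine eq_top_iff.2 fun X _ => ?_
    have hX : φ (φ.symm X) ∈ L := (hL' ▸ LieSubalgebra.mem_top _ : φ.symm X ∈ L')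
    rwa [φ.apply_symm_apply] at hX

end Chain

section OneParameter
open NormedSpace Filter Topology

variable {A : Type*} [CStarAlgebra A]

lemma norm_le_one_of_mem_unitary {u : A} (hu : u ∈ unitary A) : ‖u‖ ≤ 1 := by
  nontriviality A
  exact (CStarRing.norm_of_mem_unitary hu).le

lemma norm_pow_sub_pow_le_of_mem_unitary {u v : A} (hu : u ∈ unitary A) (hv : v ∈ unitary A)
    (n : ℕ) : ‖u ^ n - v ^ n‖ ≤ n * ‖u - v‖ := by
  induction n with
  | zero => simp
  | succ n ih =>
    calc ‖u ^ (n + 1) - v ^ (n + 1)‖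
        = ‖u * (u ^ n - v ^ n) + (u - v) * v ^ n‖ := by
          rw [pow_succ', pow_succ']
          noncomm_ring
      _ ≤ ‖u * (u ^ n - v ^ n)‖ + ‖(u - v) * v ^ n‖ := norm_add_le _ _
      _ = ‖u ^ n - v ^ n‖ + ‖u - v‖ := by
          rw [CStarRing.norm_mem_unitary_mul _ hu, CStarRing.norm_mul_mem_unitary _ (pow_mem hv n)]
      _ ≤ (n + 1 : ℕ) * ‖u - v‖ := by
          push_cast
          linarith

lemma exp_mem_unitary_of_skewAdjoint {X : A} (hX : X ∈ skewAdjoint A) : exp X ∈ unitary A :=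
  let _ := NormedAlgebra.restrictScalars ℚ ℂ A
  exp_mem_unitary_of_mem_skewAdjoint hX

lemma exp_one_div_smul_pow (X : A) (n : ℕ) :
    exp ((1 / ((n : ℝ) + 1)) • X) ^ (n + 1) = exp X := by
  let _ := NormedAlgebra.restrictScalars ℚ ℂ A
  have hn : (n : ℝ) + 1 ≠ 0 := by positivity
  rw [← NormedSpace.exp_nsmul, ← Nat.cast_smul_eq_nsmul ℝ, smul_smul, Nat.cast_add_one,
    mul_one_div_cancel hn, one_smul]

lemma exp_unitary_conj {u : A} (hu : u ∈ unitary A) (X : A) :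
    exp (u * X * star u) = u * exp X * star u :=
  let _ := NormedAlgebra.restrictScalars ℚ ℂ A
  exp_units_conj (Unitary.toUnits ⟨u, hu⟩) X

lemma tendsto_exp_mul_exp_pow_of_skewAdjoint {X Y : A} (hX : X ∈ skewAdjoint A)
    (hY : Y ∈ skewAdjoint A) :
    Tendsto (fun n : ℕ =>
        (exp ((1 / ((n : ℝ) + 1)) • X) * exp ((1 / ((n : ℝ) + 1)) • Y)) ^ (n + 1))
      atTop (𝓝 (exp (X + Y))) := by
  set f : ℝ → A := fun t => exp (t • X) * exp (t • Y) - exp (t • (X + Y))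
  have hderiv : HasDerivAt f 0 0 := by
    simpa [f] using ((hasDerivAt_exp_smul_const (𝕂 := ℝ) X 0).fun_mul
      (hasDerivAt_exp_smul_const (𝕂 := ℝ) Y 0)).fun_sub
      (hasDerivAt_exp_smul_const (𝕂 := ℝ) (X + Y) 0)
  have htime : Tendsto (fun n : ℕ => 1 / ((n : ℝ) + 1)) atTop (𝓝[≠] 0) :=
    tendsto_nhdsWithin_iff.2 ⟨tendsto_one_div_add_atTop_nhds_zero_nat,
      Eventually.of_forall fun n => (by positivity : (1 : ℝ) / (n + 1) ≠ 0)⟩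
  have hslope : Tendsto (fun n : ℕ => slope f 0 (1 / ((n : ℝ) + 1))) atTop (𝓝 0) :=
    (hasDerivAt_iff_tendsto_slope.1 hderiv).comp htime
  rw [tendsto_iff_norm_sub_tendsto_zero]
  refine squeeze_zero (fun _ => norm_nonneg _) (fun n => ?_) (norm_zero (E := A) ▸ hslope.norm)
  set t : ℝ := 1 / ((n : ℝ) + 1)
  have hunitary : ∀ {Z : A}, Z ∈ skewAdjoint A → exp (t • Z) ∈ unitary A := fun hZ =>
    exp_mem_unitary_of_skewAdjoint (skewAdjoint.smul_mem t hZ)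
  calc ‖(exp (t • X) * exp (t • Y)) ^ (n + 1) - exp (X + Y)‖
      = ‖(exp (t • X) * exp (t • Y)) ^ (n + 1) - exp (t • (X + Y)) ^ (n + 1)‖ := by
        rw [exp_one_div_smul_pow]
    _ ≤ (n + 1 : ℕ) * ‖f t‖ := norm_pow_sub_pow_le_of_mem_unitary
        (mul_mem (hunitary hX) (hunitary hY)) (hunitary (add_mem hX hY)) (n + 1)
    _ = ‖slope f 0 t‖ := by
        have hn : |(n : ℝ) + 1| = n + 1 := abs_of_pos (by positivity)
        simp [slope_def_module, norm_smul, f, t, hn]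

lemma finite_spectrum_of_isIntegral {K B : Type*} [Field K] [Ring B] [Algebra K B] {b : B}
    (hb : IsIntegral K b) : (spectrum K b).Finite := by
  classical
  nontriviality B
  refine (minpoly K b).roots.toFinset.finite_toSet.subset fun z hz => ?_
  have h := spectrum.subset_polynomial_aeval b (minpoly K b) ⟨z, hz, rfl⟩
  rw [minpoly.aeval, spectrum.zero_eq] at h
  simpa [minpoly.ne_zero hb] using h

-- Finiteness of the spectrum makes the discontinuous branch `arg` admissible in the
-- functional calculus, so no eigenvalue has to be avoided.
lemma exists_skewAdjoint_exp_eq [FiniteDimensional ℂ A] {u : A} (hu : u ∈ unitary A) :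
    ∃ X ∈ skewAdjoint A, exp X = u := by
  have : IsStarNormal u := ⟨hu.1.trans hu.2.symm⟩
  have hfin : (spectrum ℂ u).Finite :=
    finite_spectrum_of_isIntegral (Algebra.IsIntegral.isIntegral u)
  set f : ℂ → ℂ := fun z => z.arg * Complex.I
  have hf : ContinuousOn f (spectrum ℂ u) := hfin.continuousOn f
  have hskew : star (cfc f u) = -cfc f u := by
    rw [← cfc_star, ← cfc_neg]
    exact cfc_congr fun z _ => by simp [f]
  refine ⟨cfc f u, skewAdjoint.mem_iff.2 hskew, ?_⟩
  have hnormal : IsStarNormal (cfc f u) := cfc_predicate f u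
  rw [← CFC.complex_exp_eq_normedSpace_exp hnormal, ← cfc_comp' Complex.exp f u]
  conv_rhs => rw [← cfc_id ℂ u]
  refine cfc_congr fun z hz => ?_
  have hz1 : ‖z‖ = 1 := by simpa using spectrum.subset_circle_of_unitary hu hz
  simpa [f, hz1] using Complex.norm_mul_exp_arg_mul_I z

lemma star_mem_of_isClosed [FiniteDimensional ℂ A] {H : Submonoid A} (hc : IsClosed (H : Set A))
    (hu : H ≤ unitary A) {h : A} (hh : h ∈ H) : star h ∈ H := by
  have : ProperSpace A := FiniteDimensional.proper ℂ A
  have : CompactSpace (unitary A) := isCompact_iff_compactSpace.1 <|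
    Metric.isCompact_of_isClosed_isBounded isClosed_unitary <|
      (Metric.isBounded_closedBall (x := (0 : A)) (r := 1)).subset fun x hx => by
        simpa using norm_le_one_of_mem_unitary hx
  let x : unitary A := ⟨h, hu hh⟩
  have hinv : MapClusterPt x⁻¹ atTop (x ^ · : ℕ → unitary A) := by
    simpa using mapClusterPt_self_zpow_atTop_pow x (-1)
  have hstar : MapClusterPt (star h) atTop (h ^ · : ℕ → A) :=
    hinv.continuousAt_comp continuous_subtype_val.continuousAt
  exact hc.mem_of_mapClusterPt hstar (Eventually.of_forall fun n => pow_mem hh n)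

end OneParameter

section Generators
open NormedSpace Filter Topology ComplexStarModule CStarAlgebra

variable {A : Type*} [CStarAlgebra A]

/-- The skew-adjoint generators of the one-parameter groups contained in `H`. For a closed group
`H` of unitaries this is its Lie algebra. -/
def generators (H : Submonoid A) : Set A :=
  {X | X ∈ skewAdjoint A ∧ ∀ t : ℝ, exp (t • X) ∈ H}

lemma mem_generators_of_eventually {H : Submonoid A} {X : A} (hX : X ∈ skewAdjoint A)
    (h : ∀ᶠ t : ℝ in 𝓝 0, exp (t • X) ∈ H) : X ∈ generators H := by
  refine ⟨hX, fun t => ?_⟩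
  have htime : Tendsto (fun n : ℕ => 1 / ((n : ℝ) + 1) * t) atTop (𝓝 0) := by
    simpa using tendsto_one_div_add_atTop_nhds_zero_nat.mul_const t
  obtain ⟨n, hn⟩ := (htime.eventually h).exists
  rw [← exp_one_div_smul_pow _ n, smul_smul]
  exact pow_mem hn _

/-- `generators H` as a real subspace, for closed `H`. -/
def generatorSubmodule {H : Submonoid A} (hc : IsClosed (H : Set A)) : Submodule ℝ A where
  carrier := generators H
  zero_mem' := ⟨zero_mem _, fun t => by simp [one_mem]⟩
  smul_mem' s _ hX := ⟨skewAdjoint.smul_mem s hX.1, fun t => by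
    rw [smul_smul]
    exact hX.2 _⟩
  add_mem' {X Y} hX hY := by
    refine ⟨add_mem hX.1 hY.1, fun t => ?_⟩
    rw [smul_add]
    refine hc.mem_of_tendsto (tendsto_exp_mul_exp_pow_of_skewAdjoint (skewAdjoint.smul_mem t hX.1)
      (skewAdjoint.smul_mem t hY.1)) (Eventually.of_forall fun n => ?_)
    simp only [smul_smul]
    exact pow_mem (mul_mem (hX.2 _) (hY.2 _)) _

variable [FiniteDimensional ℂ A] {H : Submonoid A}

lemma conj_mem_generators (hc : IsClosed (H : Set A)) (hu : H ≤ unitary A) {X h : A}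
    (hX : X ∈ generators H) (hh : h ∈ H) : h * X * star h ∈ generators H := by
  refine ⟨skewAdjoint.conjugate hX.1 h, fun t => ?_⟩
  rw [← smul_mul_assoc, ← mul_smul_comm, exp_unitary_conj (hu hh)]
  exact mul_mem (mul_mem hh (hX.2 t)) (star_mem_of_isClosed hc hu hh)

-- The bracket is the derivative at `0` of `t ↦ exp (t X) Y exp (-t X)`.
lemma lie_mem_generators (hc : IsClosed (H : Set A)) (hu : H ≤ unitary A) {X Y : A}
    (hX : X ∈ generators H) (hY : Y ∈ generators H) : ⁅X, Y⁆ ∈ generators H := by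
  have : FiniteDimensional ℝ A := FiniteDimensional.complexToReal A
  set f : ℝ → A := fun t => exp (t • X) * Y * exp (t • -X)
  have hderiv : HasDerivAt f ⁅X, Y⁆ 0 := by
    simpa [f, Ring.lie_def, sub_eq_add_neg] using
      ((hasDerivAt_exp_smul_const (𝕂 := ℝ) X 0).mul_const Y).fun_mul
        (hasDerivAt_exp_smul_const (𝕂 := ℝ) (-X) 0)
  have hf : ∀ t, f t ∈ generatorSubmodule hc := fun t => by
    have h := conj_mem_generators hc hu hY (hX.2 t)
    rwa [star_exp, star_smul, skewAdjoint.mem_iff.1 hX.1, star_trivial] at h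
  refine (generatorSubmodule hc).closed_of_finiteDimensional.mem_of_tendsto
    (hasDerivAt_iff_tendsto_slope.1 hderiv) (Eventually.of_forall fun t => ?_)
  rw [slope_def_module]
  exact Submodule.smul_mem _ _ (sub_mem (hf t) (hf 0))

/-- The complexified Lie algebra of a closed group of unitaries. -/
noncomputable def complexGenerators (hc : IsClosed (H : Set A)) (hu : H ≤ unitary A) :
    LieSubalgebra ℂ A where
  __ := Submodule.span ℂ (generators H)
  lie_mem' {X Y} hX hY := by
    refine Submodule.span_induction₂ (p := fun X Y _ _ => ⁅X, Y⁆ ∈ Submodule.span ℂ (generators H))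
      ?_ ?_ ?_ ?_ ?_ ?_ ?_ hX hY
    · exact fun X Y hX hY => Submodule.subset_span (lie_mem_generators hc hu hX hY)
    · simp
    · simp
    · exact fun X Y Z _ _ _ hX hY => add_lie X Y Z ▸ add_mem hX hY
    · exact fun X Y Z _ _ _ hX hY => lie_add X Y Z ▸ add_mem hX hY
    · exact fun c X Y _ _ h => smul_lie c X Y ▸ Submodule.smul_mem _ c h
    · exact fun c X Y _ _ h => lie_smul c X Y ▸ Submodule.smul_mem _ c h

variable (hc : IsClosed (H : Set A)) (hu : H ≤ unitary A)

lemma conj_mem_complexGenerators {X h : A} (hX : X ∈ complexGenerators hc hu) (hh : h ∈ H) :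
    h * X * star h ∈ complexGenerators hc hu := by
  refine Submodule.span_induction (p := fun X _ => h * X * star h ∈ complexGenerators hc hu)
    (fun X hX => Submodule.subset_span (conj_mem_generators hc hu hX hh)) (by simp)
    (fun X Y _ _ hX hY => ?_) (fun c X _ hX => ?_) hX
  · rw [mul_add, add_mul]
    exact add_mem hX hY
  · rw [mul_smul_comm, smul_mul_assoc]
    exact (complexGenerators hc hu).smul_mem c hX

lemma smul_sub_star_smul_mem_generators {X : A} (hX : X ∈ complexGenerators hc hu) (c : ℂ) :
    c • X - star (c • X) ∈ generators H := by
  refine Submodule.span_induction (p := fun X _ => ∀ c : ℂ, c • X - star (c • X) ∈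
    generatorSubmodule hc) (fun X hX c => ?_) (by simp) (fun X Y _ _ hX hY c => ?_)
    (fun b X _ hX c => smul_smul c b X ▸ hX (c * b)) hX c
  · have hre : c • X - star (c • X) = (2 * c.re) • X := by
      rw [star_smul, skewAdjoint.mem_iff.1 hX.1, smul_neg, sub_neg_eq_add, ← add_smul,
        ← Complex.coe_smul]
      congr 1
      simpa using Complex.add_conj c
    exact hre ▸ Submodule.smul_mem _ _ hX
  · rw [smul_add, star_add, add_sub_add_comm]
    exact add_mem (hX c) (hY c)

lemma unitary_le_of_complexGenerators_eq_top (h : complexGenerators hc hu = ⊤) :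
    unitary A ≤ H := by
  intro u hu'
  obtain ⟨X, hX, rfl⟩ := exists_skewAdjoint_exp_eq hu'
  have hmem := smul_sub_star_smul_mem_generators hc hu
    (h ▸ LieSubalgebra.mem_top X : X ∈ complexGenerators hc hu) (1 / 2)
  have hXX : (1 / 2 : ℂ) • X - star ((1 / 2 : ℂ) • X) = X := by
    rw [star_smul, skewAdjoint.mem_iff.1 hX, smul_neg, sub_neg_eq_add, ← add_smul]
    norm_num
  rw [hXX] at hmem
  simpa using hmem.2 1

lemma map_mem_complexGenerators {B : Type*} [CStarAlgebra B] (φ : B →⋆ₐ[ℂ] A)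
    (hφ : ∀ᶠ u in 𝓝[unitary B] 1, φ u ∈ H) (b : B) : φ b ∈ complexGenerators hc hu := by
  have hskew : ∀ X ∈ skewAdjoint B, φ X ∈ complexGenerators hc hu := fun X hX => by
    have hφX : φ X ∈ skewAdjoint A := by
      rw [skewAdjoint.mem_iff, ← map_star, skewAdjoint.mem_iff.1 hX, map_neg]
    have hexp : Tendsto (fun t : ℝ => exp (t • X)) (𝓝 0) (𝓝[unitary B] 1) := by
      refine tendsto_nhdsWithin_iff.2 ⟨?_, Eventually.of_forall fun t =>
        exp_mem_unitary_of_skewAdjoint (skewAdjoint.smul_mem t hX)⟩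
      simpa using (hasDerivAt_exp_smul_const (𝕂 := ℝ) X 0).continuousAt.tendsto
    refine Submodule.subset_span (mem_generators_of_eventually hφX ?_)
    filter_upwards [hexp.eventually hφ] with t ht
    let _ := NormedAlgebra.restrictScalars ℚ ℂ A
    let _ := NormedAlgebra.restrictScalars ℚ ℂ B
    rwa [map_exp φ (map_continuous φ), ← Complex.coe_smul, map_smul, Complex.coe_smul] at ht
  have hself : ∀ X : selfAdjoint B, φ X ∈ complexGenerators hc hu := fun X => by
    have h := (complexGenerators hc hu).smul_mem (-Complex.I)
      (hskew (Complex.I • (X : B)) (by simp))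
    simpa [smul_smul] using h
  rw [← realPart_add_I_smul_imaginaryPart b, map_add, map_smul]
  exact add_mem (hself _) ((complexGenerators hc hu).smul_mem _ (hself _))

end Generators

section Gates
open Kronecker Topology

variable {d : ℕ}

/-- The partial trace over the second tensor factor. -/
def partialTraceRight {R m n : Type*} [AddCommMonoid R] [Fintype n]
    (X : Matrix (m × n) (m × n) R) : Matrix m m R :=
  of fun a a' => ∑ b, X (a, b) (a', b)

lemma partialTraceRight_add {R m n : Type*} [AddCommMonoid R] [Fintype n]
    (X Y : Matrix (m × n) (m × n) R) :
    partialTraceRight (X + Y) = partialTraceRight X + partialTraceRight Y := by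
  ext
  simp [partialTraceRight, Finset.sum_add_distrib]

lemma partialTraceRight_kronecker {R m n : Type*} [CommSemiring R] [Fintype n] (a : Matrix m m R)
    (b : Matrix n n R) : partialTraceRight (a ⊗ₖ b) = b.trace • a := by
  ext
  simp [partialTraceRight, ← Finset.mul_sum, trace, mul_comm]

lemma partialTraceRight_conj_apply (g : Matrix (Fin d × Fin d) (Fin d × Fin d) ℂ)
    (x : Matrix (Fin d) (Fin d) ℂ) (a a' : Fin d) :
    partialTraceRight (g * (x ⊗ₖ 1) * star g) a a' =
      ∑ c, ∑ c', x c c' * (reshuffle g * star (reshuffle g)) (c, a) (c', a') := by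
  have hleft : ∀ b c' e, (g * (x ⊗ₖ (1 : Matrix (Fin d) (Fin d) ℂ))) (a, b) (c', e) =
      ∑ c, g (a, b) (c, e) * x c c' := fun b c' e => by
    simp [Matrix.mul_apply, Fintype.sum_prod_type, one_apply]
  calc partialTraceRight (g * (x ⊗ₖ 1) * star g) a a'
      = ∑ b, ∑ c', ∑ e, ∑ c, x c c' * (g (a, b) (c, e) * star (g (a', b) (c', e))) := by
        rw [partialTraceRight, of_apply]
        refine Finset.sum_congr rfl fun b _ => (Matrix.mul_apply ..).trans ?_
        simp only [Fintype.sum_prod_type, hleft, star_apply,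
          Finset.sum_mul, mul_assoc, mul_left_comm (x _ _)]
    _ = ∑ c', ∑ b, ∑ c, ∑ e, x c c' * (g (a, b) (c, e) * star (g (a', b) (c', e))) := by
        rw [Finset.sum_comm]
        exact Finset.sum_congr rfl fun c' _ => Finset.sum_congr rfl fun b _ => Finset.sum_comm
    _ = ∑ c', ∑ c, ∑ e, ∑ b, x c c' * (g (a, b) (c, e) * star (g (a', b) (c', e))) := by
        refine Finset.sum_congr rfl fun c' _ => Finset.sum_comm.trans ?_
        exact Finset.sum_congr rfl fun c _ => Finset.sum_comm
    _ = ∑ c, ∑ c', x c c' * (reshuffle g * star (reshuffle g)) (c, a) (c', a') := by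
        rw [Finset.sum_comm]
        simp only [Matrix.mul_apply, Fintype.sum_prod_type, reshuffle, star_apply,
          Finset.mul_sum]

lemma partialTraceRight_conj_kronecker_one {g : Matrix (Fin d × Fin d) (Fin d × Fin d) ℂ}
    (hg : reshuffle g ∈ unitary (Matrix (Fin d × Fin d) (Fin d × Fin d) ℂ))
    (x : Matrix (Fin d) (Fin d) ℂ) :
    partialTraceRight (g * (x ⊗ₖ 1) * star g) = x.trace • 1 := by
  ext a a'
  rw [partialTraceRight_conj_apply, mem_unitaryGroup_iff.1 hg]
  by_cases haa : a = a' <;> simp [one_apply, haa, trace]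

lemma reshuffle_mem_unitary_of_partialTraceRight_conj_single
    {g : Matrix (Fin d × Fin d) (Fin d × Fin d) ℂ}
    (h : ∀ c c', partialTraceRight (g * (single c c' 1 ⊗ₖ 1) * star g) =
      (single c c' (1 : ℂ)).trace • 1) :
    reshuffle g ∈ unitary (Matrix (Fin d × Fin d) (Fin d × Fin d) ℂ) := by
  refine mem_unitaryGroup_iff.2 ?_
  ext ⟨c, a⟩ ⟨c', a'⟩
  have hca := congrFun₂ (h c c') a a'
  rw [partialTraceRight_conj_apply] at hca
  by_cases hcc : c = c'
  · subst hcc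
    simpa [single_apply, ite_and, one_apply] using hca
  · simpa [single_apply, ite_and, one_apply, hcc] using hca

/-- The gate seen with its two sites interchanged. -/
def swapSites (X : Matrix (Fin d × Fin d) (Fin d × Fin d) ℂ) :
    Matrix (Fin d × Fin d) (Fin d × Fin d) ℂ :=
  X.submatrix (Equiv.prodComm _ _) (Equiv.prodComm _ _)

lemma swapSites_swapSites (X : Matrix (Fin d × Fin d) (Fin d × Fin d) ℂ) :
    swapSites (swapSites X) = X := rfl

lemma swapSites_kronecker (a b : Matrix (Fin d) (Fin d) ℂ) :
    swapSites (a ⊗ₖ b) = b ⊗ₖ a := by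
  ext
  simp [swapSites, mul_comm]

lemma swapSites_mul (X Y : Matrix (Fin d × Fin d) (Fin d × Fin d) ℂ) :
    swapSites (X * Y) = swapSites X * swapSites Y :=
  (submatrix_mul_equiv X Y _ _ _).symm

lemma swapSites_add (X Y : Matrix (Fin d × Fin d) (Fin d × Fin d) ℂ) :
    swapSites (X + Y) = swapSites X + swapSites Y := rfl

lemma star_swapSites (X : Matrix (Fin d × Fin d) (Fin d × Fin d) ℂ) :
    star (swapSites X) = swapSites (star X) := rfl

lemma swapSites_mem_unitary {g : Matrix (Fin d × Fin d) (Fin d × Fin d) ℂ}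
    (hg : g ∈ unitary (Matrix (Fin d × Fin d) (Fin d × Fin d) ℂ)) :
    swapSites g ∈ unitary (Matrix (Fin d × Fin d) (Fin d × Fin d) ℂ) := by
  refine mem_unitaryGroup_iff.2 ?_
  rw [star_swapSites, ← swapSites_mul, mem_unitaryGroup_iff.1 hg]
  exact submatrix_one_equiv _

lemma swapSites_mem_dualUnitary {g : Matrix (Fin d × Fin d) (Fin d × Fin d) ℂ}
    (hg : g ∈ DualUnitary d) : swapSites g ∈ DualUnitary d :=
  ⟨swapSites_mem_unitary hg.1, transpose_mem_unitaryGroup_iff.2 hg.2⟩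

lemma kronecker_one_mul_mem_dualUnitary {u : Matrix (Fin d) (Fin d) ℂ}
    (hu : u ∈ unitary (Matrix (Fin d) (Fin d) ℂ))
    {g : Matrix (Fin d × Fin d) (Fin d × Fin d) ℂ} (hg : g ∈ DualUnitary d) :
    (u ⊗ₖ 1) * g ∈ DualUnitary d := by
  have hresh : reshuffle ((u ⊗ₖ 1) * g) = (1 ⊗ₖ u) * reshuffle g := by
    ext
    simp [reshuffle, mul_apply, Fintype.sum_prod_type, one_apply]
  exact ⟨mul_mem (kronecker_mem_unitary hu (one_mem _)) hg.1,
    hresh ▸ mul_mem (kronecker_mem_unitary (one_mem _) hu) hg.2⟩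

lemma one_kronecker_mul_mem_dualUnitary {u : Matrix (Fin d) (Fin d) ℂ}
    (hu : u ∈ unitary (Matrix (Fin d) (Fin d) ℂ))
    {g : Matrix (Fin d × Fin d) (Fin d × Fin d) ℂ} (hg : g ∈ DualUnitary d) :
    (1 ⊗ₖ u) * g ∈ DualUnitary d := by
  have h := swapSites_mem_dualUnitary
    (kronecker_one_mul_mem_dualUnitary hu (swapSites_mem_dualUnitary hg))
  rwa [swapSites_mul, swapSites_kronecker, swapSites_swapSites] at h

/-- Conjugation by `g` exchanges the operator algebras of the two sites. -/
def SwapLike (g : Matrix (Fin d × Fin d) (Fin d × Fin d) ℂ) : Prop :=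
  (∀ x : Matrix (Fin d) (Fin d) ℂ, ∃ y : Matrix (Fin d) (Fin d) ℂ,
    g * (x ⊗ₖ 1) * star g = 1 ⊗ₖ y) ∧
  ∀ y : Matrix (Fin d) (Fin d) ℂ, ∃ x : Matrix (Fin d) (Fin d) ℂ,
    g * (1 ⊗ₖ y) * star g = x ⊗ₖ 1

lemma conj_kronecker_one_eq_one_kronecker [Nonempty (Fin d)]
    {g : Matrix (Fin d × Fin d) (Fin d × Fin d) ℂ} (hg : g ∈ DualUnitary d)
    {x A B : Matrix (Fin d) (Fin d) ℂ}
    (h : g * (x ⊗ₖ 1) * star g = A ⊗ₖ 1 + 1 ⊗ₖ B) :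
    ∃ y : Matrix (Fin d) (Fin d) ℂ, g * (x ⊗ₖ 1) * star g = 1 ⊗ₖ y := by
  have hd : (d : ℂ) ≠ 0 := Nat.cast_ne_zero.2 (Fin.pos_iff_nonempty.2 ‹_›).ne'
  have htrace : (d : ℂ) • A + B.trace • 1 = x.trace • 1 := by
    rw [← partialTraceRight_conj_kronecker_one hg.2 x, h, partialTraceRight_add,
      partialTraceRight_kronecker, partialTraceRight_kronecker, trace_one, Fintype.card_fin]
  have hA : A = ((d : ℂ)⁻¹ * (x.trace - B.trace)) • 1 := by
    rw [mul_smul, sub_smul, ← htrace, add_sub_cancel_right, inv_smul_smul₀ hd]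
  refine ⟨((d : ℂ)⁻¹ * (x.trace - B.trace)) • 1 + B, ?_⟩
  rw [h, hA, kronecker_add, smul_kronecker, kronecker_smul]

lemma partialTraceRight_conj_kronecker_eq_zero {g : Matrix (Fin d × Fin d) (Fin d × Fin d) ℂ}
    (hg : g ∈ DualUnitary d) (hs : SwapLike g) {x : Matrix (Fin d) (Fin d) ℂ}
    (hx : x.trace = 0) (y : Matrix (Fin d) (Fin d) ℂ) :
    partialTraceRight (g * (x ⊗ₖ y) * star g) = 0 := by
  obtain ⟨y', hy'⟩ := hs.1 x
  obtain ⟨x', hx'⟩ := hs.2 y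
  have htrace : y'.trace • (1 : Matrix (Fin d) (Fin d) ℂ) = 0 := by
    rw [← partialTraceRight_kronecker, ← hy', partialTraceRight_conj_kronecker_one hg.2, hx,
      zero_smul]
  have hconj : g * (x ⊗ₖ y) * star g = x' ⊗ₖ y' := by
    calc g * (x ⊗ₖ y) * star g
        = g * (x ⊗ₖ 1) * (star g * g) * (1 ⊗ₖ y) * star g := by
          rw [hg.1.1, mul_one, mul_assoc g (x ⊗ₖ 1), ← mul_kronecker_mul, mul_one, one_mul]
      _ = (g * (x ⊗ₖ 1) * star g) * (g * (1 ⊗ₖ y) * star g) := by simp only [mul_assoc]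
      _ = x' ⊗ₖ y' := by rw [hx', hy', ← mul_kronecker_mul, one_mul, mul_one]
  rw [hconj, partialTraceRight_kronecker, ← one_mul x', ← smul_mul_assoc, htrace, zero_mul]

lemma diagonal_conj_single_kronecker_one (φ : Fin d × Fin d → ℂ) (c c' : Fin d) :
    diagonal φ * (single c c' 1 ⊗ₖ 1) * star (diagonal φ) =
      single c c' 1 ⊗ₖ diagonal fun e => φ (c, e) * star (φ (c', e)) := by
  ext ⟨a, b⟩ ⟨a', b'⟩
  rw [star_eq_conjTranspose, diagonal_conjTranspose, mul_diagonal, diagonal_mul]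
  by_cases hb : b = b' <;> by_cases ha : c = a ∧ c' = a'
  · obtain ⟨rfl, rfl⟩ := ha
    simp [hb]
  all_goals simp [hb, ha]

lemma diagonal_mem_unitary_s16 {R n : Type*} [CommRing R] [StarRing R] [Fintype n] [DecidableEq n]
    {φ : n → R} (hφ : ∀ p, φ p * star (φ p) = 1) : diagonal φ ∈ unitary (Matrix n n R) := by
  refine mem_unitaryGroup_iff.2 ?_
  rw [star_eq_conjTranspose, diagonal_conjTranspose, diagonal_mul_diagonal, ← diagonal_one]
  exact congrArg diagonal (funext hφ)

lemma mul_diagonal_mem_dualUnitary {g : Matrix (Fin d × Fin d) (Fin d × Fin d) ℂ}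
    (hg : g ∈ DualUnitary d) (hs : SwapLike g) {φ : Fin d × Fin d → ℂ}
    (hφ : ∀ p, φ p * star (φ p) = 1) : g * diagonal φ ∈ DualUnitary d := by
  refine ⟨mul_mem hg.1 (diagonal_mem_unitary_s16 hφ),
    reshuffle_mem_unitary_of_partialTraceRight_conj_single fun c c' => ?_⟩
  have hconj : g * diagonal φ * (single c c' 1 ⊗ₖ 1) * star (g * diagonal φ) =
      g * (single c c' 1 ⊗ₖ diagonal fun e => φ (c, e) * star (φ (c', e))) * star g := by
    rw [← diagonal_conj_single_kronecker_one, star_mul]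
    simp only [mul_assoc]
  rw [hconj]
  by_cases hcc : c = c'
  · subst hcc
    simp only [hφ, diagonal_one]
    exact partialTraceRight_conj_kronecker_one hg.2 _
  · have htrace : (single c c' (1 : ℂ)).trace = 0 := trace_single_eq_of_ne c c' 1 hcc
    rw [partialTraceRight_conj_kronecker_eq_zero hg hs htrace, htrace, zero_smul]

lemma phase_eq_of_swapLike {g : Matrix (Fin d × Fin d) (Fin d × Fin d) ℂ}
    (hg : g ∈ unitary (Matrix (Fin d × Fin d) (Fin d × Fin d) ℂ)) {φ : Fin d × Fin d → ℂ}
    (hs : SwapLike g) (hsφ : SwapLike (g * diagonal φ)) (c c' e e' : Fin d) :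
    φ (c, e) * star (φ (c', e)) = φ (c, e') * star (φ (c', e')) := by
  set D : Matrix (Fin d) (Fin d) ℂ := diagonal fun e => φ (c, e) * star (φ (c', e)) with hD
  obtain ⟨y, hy⟩ := hsφ.1 (single c c' 1)
  obtain ⟨x, hx⟩ := hs.2 (single e e' 1)
  have hgD : g * (single c c' 1 ⊗ₖ D) * star g = 1 ⊗ₖ y := by
    rw [← hy, hD, ← diagonal_conj_single_kronecker_one, star_mul]
    simp only [mul_assoc]
  have hcomm : Commute (single c c' 1 ⊗ₖ D) (1 ⊗ₖ single e e' (1 : ℂ)) := by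
    have himage : Commute (g * (single c c' 1 ⊗ₖ D) * star g)
        (g * (1 ⊗ₖ single e e' 1) * star g) := by
      rw [hgD, hx, commute_iff_eq, ← mul_kronecker_mul, ← mul_kronecker_mul]
      simp only [one_mul, mul_one]
    exact Commute.of_map (f := Unitary.conjStarAlgAut ℂ _ ⟨g, hg⟩) (EquivLike.injective _) himage
  have hentry := congrFun₂ hcomm.eq (c, e) (c', e')
  simpa [← mul_kronecker_mul, hD] using hentry

lemma exists_not_swapLike [Nontrivial (Fin d)]
    {G V : Set (Matrix (Fin d × Fin d) (Fin d × Fin d) ℂ)} (hne : G.Nonempty) (hV : IsOpen V)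
    (hG : G = DualUnitary d ∩ V) : ∃ g ∈ G, ¬ SwapLike g := by
  by_contra! hall
  subst hG
  obtain ⟨g, hg, hgV⟩ := hne
  have hgs := hall g ⟨hg, hgV⟩
  obtain ⟨i, j, hij⟩ := exists_pair_ne (Fin d)
  let φ : Circle → Fin d × Fin d → ℂ := fun z => Function.update 1 (i, i) ↑z
  have hφ : ∀ z p, φ z p * star (φ z p) = 1 := fun z p => by
    by_cases hp : p = (i, i) <;> simp [φ, hp, Complex.mul_conj]
  have hφ_one : φ 1 = 1 := Function.update_eq_self _ _
  have hcont : Continuous fun z => g * diagonal (φ z) :=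
    continuous_const.mul (Continuous.matrix_diagonal (by fun_prop))
  have hnear : ∀ᶠ z in 𝓝[≠] (1 : Circle), g * diagonal (φ z) ∈ V :=
    hcont.continuousAt.continuousWithinAt.eventually_mem
      (hV.mem_nhds (by simpa [hφ_one] using hgV))
  have : Nontrivial Circle := ⟨1, -1, fun h => self_ne_neg.2 one_ne_zero (Circle.ext_iff.1 h)⟩
  obtain ⟨z, hzV, hz⟩ := (hnear.and self_mem_nhdsWithin).exists
  have hzs := hall _ ⟨mul_diagonal_mem_dualUnitary hg hgs (hφ z), hzV⟩
  have hphase := phase_eq_of_swapLike hg.1 hgs hzs i j i j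
  exact hz (Circle.ext (by simpa [φ, Function.update_apply, hij.symm] using hphase))

lemma swapLike_of_forall_conj_eq_kronecker_add [Nonempty (Fin d)]
    {g : Matrix (Fin d × Fin d) (Fin d × Fin d) ℂ} (hg : g ∈ DualUnitary d)
    (hleft : ∀ x : Matrix (Fin d) (Fin d) ℂ, ∃ A B : Matrix (Fin d) (Fin d) ℂ,
      g * (x ⊗ₖ 1) * star g = A ⊗ₖ 1 + 1 ⊗ₖ B)
    (hright : ∀ y : Matrix (Fin d) (Fin d) ℂ, ∃ A B : Matrix (Fin d) (Fin d) ℂ,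
      g * (1 ⊗ₖ y) * star g = A ⊗ₖ 1 + 1 ⊗ₖ B) : SwapLike g := by
  refine ⟨fun x => ?_, fun y => ?_⟩
  · obtain ⟨A, B, hAB⟩ := hleft x
    exact conj_kronecker_one_eq_one_kronecker hg hAB
  · obtain ⟨A, B, hAB⟩ := hright y
    have hswap : swapSites g * (y ⊗ₖ 1) * star (swapSites g) =
        swapSites (g * (1 ⊗ₖ y) * star g) := by
      rw [swapSites_mul, swapSites_mul, swapSites_kronecker, star_swapSites]
    obtain ⟨x, hx⟩ := conj_kronecker_one_eq_one_kronecker (swapSites_mem_dualUnitary hg)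
      (hswap.trans (by rw [hAB, swapSites_add, swapSites_kronecker, swapSites_kronecker, add_comm]))
    exact ⟨x, by rw [← swapSites_swapSites (_ * star g), ← hswap, hx, swapSites_kronecker]⟩

lemma lieSubalgebra_eq_top_of_not_swapLike [Nonempty (Fin d)]
    {L : LieSubalgebra ℂ (Matrix (Fin d × Fin d) (Fin d × Fin d) ℂ)}
    (hL : ∀ a : Matrix (Fin d) (Fin d) ℂ, a ⊗ₖ 1 ∈ L)
    (hR : ∀ b : Matrix (Fin d) (Fin d) ℂ, 1 ⊗ₖ b ∈ L)
    {g : Matrix (Fin d × Fin d) (Fin d × Fin d) ℂ} (hg : g ∈ DualUnitary d)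
    (hgs : ¬ SwapLike g) (hconj : ∀ W ∈ L, g * W * star g ∈ L) : L = ⊤ :=
  (eq_top_or_exists_eq_kronecker_add hL hR).resolve_right fun h =>
    hgs (swapLike_of_forall_conj_eq_kronecker_add hg (fun x => h _ (hconj _ (hL x)))
      fun y => h _ (hconj _ (hR y)))

end Gates

section Layers
open Kronecker

/-- A splitting of the basis states into a product embeds the operators on the first factor. -/
def leftFactorHom {R k m n : Type*} [CommRing R] [StarRing R] [Fintype k] [DecidableEq k]
    [Fintype m] [DecidableEq m] [Fintype n] [DecidableEq n] (e : k ≃ m × n) :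
    Matrix m m R →⋆ₐ[R] Matrix k k R where
  toFun X := (X ⊗ₖ 1).submatrix e e
  map_one' := by rw [one_kronecker_one, submatrix_one_equiv]
  map_mul' X Y := by rw [submatrix_mul_equiv, ← mul_kronecker_mul, one_mul]
  map_zero' := by rw [zero_kronecker, submatrix_zero, Pi.zero_apply, Pi.zero_apply]
  map_add' X Y := by rw [add_kronecker, submatrix_add, Pi.add_apply, Pi.add_apply]
  commutes' z := by
    rw [Algebra.algebraMap_eq_smul_one, Algebra.algebraMap_eq_smul_one, smul_kronecker,
      one_kronecker_one, submatrix_smul, Pi.smul_apply, Pi.smul_apply, submatrix_one_equiv]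
  map_star' X := by
    rw [star_eq_conjTranspose, star_eq_conjTranspose, conjTranspose_submatrix,
      conjTranspose_kronecker, conjTranspose_one]

variable {d N : ℕ} {P : Finset (Fin N × Fin N)}

/-- No site occurs twice among the pairs in `P`, so that gates on these pairs can be applied
simultaneously. -/
def DisjointPairs (P : Finset (Fin N × Fin N)) : Prop :=
  Function.Injective (Sum.elim (fun p : P => p.1.1) (fun p : P => p.1.2))

lemma disjointPairs_of_forall_mod_two {c : ℕ}
    (h : ∀ p ∈ P, (p.1 : ℕ) % 2 = c ∧ (p.2 : ℕ) = (p.1 : ℕ) + 1) : DisjointPairs P := by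
  refine Function.Injective.sumElim (fun p q hpq => ?_) (fun p q hpq => ?_) fun p q hpq => ?_
  all_goals
    have hp := h p p.2
    have hq := h q q.2
    simp only [Subtype.ext_iff, Prod.ext_iff, Fin.ext_iff] at hpq ⊢
    lia

/-- The sites on which a layer with gates on the pairs in `P` acts trivially. -/
abbrev UnpairedSite (P : Finset (Fin N × Fin N)) : Type :=
  {s : Fin N // ∀ p ∈ P, s ≠ p.1 ∧ s ≠ p.2}

/-- Every site is the first or the second element of a unique pair, or unpaired. -/
noncomputable def siteEquiv (hP : DisjointPairs P) :
    (P ⊕ P) ⊕ UnpairedSite P ≃ Fin N :=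
  Equiv.ofBijective
    (Sum.elim (Sum.elim (fun p : P => p.1.1) (fun p : P => p.1.2)) Subtype.val) <| by
    refine ⟨hP.sumElim Subtype.val_injective ?_, fun s => ?_⟩
    · rintro (p | p) s
      exacts [(s.2 p p.2).1.symm, (s.2 p p.2).2.symm]
    · by_contra! hs
      exact hs (.inr ⟨s, fun p hp =>
        ⟨(hs (.inl (.inl ⟨p, hp⟩))).symm, (hs (.inl (.inr ⟨p, hp⟩))).symm⟩⟩) rfl

/-- A basis state is given by its restrictions to the pairs and to the unpaired sites. -/
noncomputable def configEquiv (d : ℕ) (hP : DisjointPairs P) :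
    (Fin N → Fin d) ≃ (P → Fin d × Fin d) × (UnpairedSite P → Fin d) :=
  ((siteEquiv hP).arrowCongr (Equiv.refl (Fin d))).symm.trans <|
    (Equiv.sumArrowEquivProdArrow (P ⊕ P) (UnpairedSite P) (Fin d)).trans <|
      ((Equiv.sumArrowEquivProdArrow P P (Fin d)).trans
        (Equiv.arrowProdEquivProdArrow P (fun _ => Fin d) (fun _ => Fin d)).symm).prodCongr
          (Equiv.refl (UnpairedSite P → Fin d))

lemma configEquiv_apply (hP : DisjointPairs P) (r : Fin N → Fin d) :
    configEquiv d hP r = (fun p : P => (r p.1.1, r p.1.2), fun s : UnpairedSite P => r s) := rfl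

/-- The embedding of the operators on the paired sites, acting trivially on the unpaired ones. -/
noncomputable def layerHom (d : ℕ) (hP : DisjointPairs P) :
    Matrix (P → Fin d × Fin d) (P → Fin d × Fin d) ℂ →⋆ₐ[ℂ]
      Matrix (Fin N → Fin d) (Fin N → Fin d) ℂ :=
  leftFactorHom (configEquiv d hP)

lemma layerHom_apply (hP : DisjointPairs P)
    (X : Matrix (P → Fin d × Fin d) (P → Fin d × Fin d) ℂ) (r c : Fin N → Fin d) :
    layerHom d hP X r c = X (fun p => (r p.1.1, r p.1.2)) (fun p => (c p.1.1, c p.1.2)) *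
      ∏ s : UnpairedSite P, (1 : Matrix (Fin d) (Fin d) ℂ) (r s) (c s) := by
  simp [layerHom, leftFactorHom, configEquiv_apply, one_apply, Finset.prod_ite_zero, funext_iff]

lemma layerMatrix_eq_layerHom (hP : DisjointPairs P)
    (u : Fin N × Fin N → Matrix (Fin d × Fin d) (Fin d × Fin d) ℂ) :
    layerMatrix d N P u = layerHom d hP (piKronecker fun p : P => u p) := by
  ext r c
  rw [layerHom_apply, layerMatrix,
    Finset.prod_subtype _ (p := fun s => ∀ p ∈ P, s ≠ p.1 ∧ s ≠ p.2) (by simp)]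
  congr 1
  exact (Finset.prod_coe_sort P _).symm

lemma layerHom_piKronecker_kronecker (hP : DisjointPairs P) {x : Fin N → Matrix (Fin d) (Fin d) ℂ}
    (hx : ∀ s, (∀ p ∈ P, s ≠ p.1 ∧ s ≠ p.2) → x s = 1) :
    layerHom d hP (piKronecker fun p : P => x p.1.1 ⊗ₖ x p.1.2) = piKronecker x := by
  ext r c
  rw [layerHom_apply]
  simp only [piKronecker, of_apply, kroneckerMap_apply, Finset.prod_mul_distrib]
  rw [← (siteEquiv hP).prod_comp, Fintype.prod_sum_type, Fintype.prod_sum_type]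
  exact congrArg _ (Finset.prod_congr rfl fun s _ => congrArg (· (r s) (c s)) (hx s s.2).symm)

/-- The embedding of the operators on a single pair of sites. -/
noncomputable def gateHom (d : ℕ) (hP : DisjointPairs P) (p : P) :
    Matrix (Fin d × Fin d) (Fin d × Fin d) ℂ →⋆ₐ[ℂ] Matrix (Fin N → Fin d) (Fin N → Fin d) ℂ :=
  (layerHom d hP).comp (siteHom (m := fun _ : P => Fin d × Fin d) p)

lemma gateHom_apply (hP : DisjointPairs P) (p : P)
    (W : Matrix (Fin d × Fin d) (Fin d × Fin d) ℂ) :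
    gateHom d hP p W = layerHom d hP (siteOp (m := fun _ : P => Fin d × Fin d) p W) := rfl

lemma gateHom_kronecker (hP : DisjointPairs P) (p : P) (a b : Matrix (Fin d) (Fin d) ℂ) :
    gateHom d hP p (a ⊗ₖ b) = siteOp p.1.1 a * siteOp p.1.2 b := by
  have h12 : ∀ q q' : P, q.1.1 ≠ q'.1.2 := fun q q' h => by simpa using @hP (.inl q) (.inr q') h
  have h11 : ∀ q : P, q ≠ p → q.1.1 ≠ p.1.1 := fun q hq h =>
    hq (by simpa using @hP (.inl q) (.inl p) h)
  have h22 : ∀ q : P, q ≠ p → q.1.2 ≠ p.1.2 := fun q hq h =>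
    hq (by simpa using @hP (.inr q) (.inr p) h)
  set x : Fin N → Matrix (Fin d) (Fin d) ℂ := Pi.mulSingle p.1.1 a * Pi.mulSingle p.1.2 b with hx
  have hpair : (Pi.mulSingle p (a ⊗ₖ b) : P → Matrix (Fin d × Fin d) (Fin d × Fin d) ℂ) =
      fun q : P => x q.1.1 ⊗ₖ x q.1.2 := by
    ext q : 1
    by_cases hq : q = p
    · subst hq
      simp [hx, h12 q q, (h12 q q).symm]
    · simp [hx, hq, h11 q hq, h22 q hq, h12 q p, (h12 p q).symm]
  rw [siteOp, siteOp, piKronecker_mul]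
  refine (congrArg (layerHom d hP) (congrArg piKronecker hpair)).trans
    (layerHom_piKronecker_kronecker hP fun s hs => ?_)
  simp [hx, hs p p.2]

lemma gateHom_eq_layerMatrix_mul_star (hP : DisjointPairs P) (p : P)
    (v : Matrix (Fin d × Fin d) (Fin d × Fin d) ℂ)
    {g : Matrix (Fin d × Fin d) (Fin d × Fin d) ℂ}
    (hg : g ∈ unitary (Matrix (Fin d × Fin d) (Fin d × Fin d) ℂ)) :
    gateHom d hP p v = layerMatrix d N P (Function.update (fun _ => g) p.1 (v * g)) *
      star (layerMatrix d N P fun _ => g) := by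
  have hsite : siteOp p v = piKronecker (fun q : P => Function.update (fun _ => g) p.1 (v * g) q.1)
      * star (piKronecker fun _ : P => g) := by
    rw [star_piKronecker, piKronecker_mul, siteOp]
    congr 1
    ext q : 1
    by_cases hq : q = p
    · subst hq
      simp [mul_assoc, Unitary.mul_star_self_of_mem hg]
    · simp [hq, Unitary.mul_star_self_of_mem hg]
  rw [layerMatrix_eq_layerHom hP, layerMatrix_eq_layerHom hP, ← map_star, ← map_mul, ← hsite,
    gateHom_apply]

lemma layerMatrix_conj_gateHom (hP : DisjointPairs P) (p : P)
    {u : Fin N × Fin N → Matrix (Fin d × Fin d) (Fin d × Fin d) ℂ}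
    (hu : ∀ p ∈ P, u p ∈ unitary (Matrix (Fin d × Fin d) (Fin d × Fin d) ℂ))
    (W : Matrix (Fin d × Fin d) (Fin d × Fin d) ℂ) :
    layerMatrix d N P u * gateHom d hP p W * star (layerMatrix d N P u) =
      gateHom d hP p (u p * W * star (u p)) := by
  have hsite := piKronecker_conj_siteOp (u := fun q : P => u q) (fun q => hu q q.2) p W
  rw [layerMatrix_eq_layerHom hP, gateHom_apply, gateHom_apply, ← hsite, map_mul, map_mul,
    map_star]

lemma layerMatrix_mem_unitary (hP : DisjointPairs P)
    {u : Fin N × Fin N → Matrix (Fin d × Fin d) (Fin d × Fin d) ℂ}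
    (hu : ∀ p ∈ P, u p ∈ unitary (Matrix (Fin d × Fin d) (Fin d × Fin d) ℂ)) :
    layerMatrix d N P u ∈ unitary (Matrix (Fin N → Fin d) (Fin N → Fin d) ℂ) := by
  rw [layerMatrix_eq_layerHom hP]
  exact Unitary.map_mem _ (piKronecker_mem_unitary fun p => hu p p.2)

end Layers

section Circuits
open Kronecker Topology Filter
open scoped Matrix.Norms.L2Operator

variable {d N : ℕ} {P : Finset (Fin N × Fin N)}
  {G : Set (Matrix (Fin d × Fin d) (Fin d × Fin d) ℂ)}

/-- The brick-wall circuits with gates from `G`, as a monoid. -/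
def circuitMonoid (d N : ℕ) (G : Set (Matrix (Fin d × Fin d) (Fin d × Fin d) ℂ)) :
    Submonoid (Matrix (Fin N → Fin d) (Fin N → Fin d) ℂ) where
  carrier := BrickCircuits d N G
  one_mem' := ⟨[], by simp, rfl⟩
  mul_mem' := by
    rintro _ _ ⟨l, hl, rfl⟩ ⟨l', hl', rfl⟩
    exact ⟨l ++ l', List.forall_mem_append.2 ⟨hl, hl'⟩, List.prod_append.symm⟩

lemma disjointPairs_evenPairs : DisjointPairs (evenPairs N) :=
  disjointPairs_of_forall_mod_two fun _ hp => (Finset.mem_filter.1 hp).2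

lemma disjointPairs_oddPairs : DisjointPairs (oddPairs N) :=
  disjointPairs_of_forall_mod_two fun _ hp => (Finset.mem_filter.1 hp).2

lemma layerMatrix_evenPairs_mem_circuitMonoid
    {u : Fin N × Fin N → Matrix (Fin d × Fin d) (Fin d × Fin d) ℂ}
    (hu : ∀ p ∈ evenPairs N, u p ∈ G) : layerMatrix d N (evenPairs N) u ∈ circuitMonoid d N G :=
  ⟨[_], List.forall_mem_singleton.2 ⟨u, .inl ⟨hu, rfl⟩⟩, List.prod_singleton.symm⟩

lemma layerMatrix_oddPairs_mem_circuitMonoid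
    {u : Fin N × Fin N → Matrix (Fin d × Fin d) (Fin d × Fin d) ℂ}
    (hu : ∀ p ∈ oddPairs N, u p ∈ G) : layerMatrix d N (oddPairs N) u ∈ circuitMonoid d N G :=
  ⟨[_], List.forall_mem_singleton.2 ⟨u, .inr ⟨hu, rfl⟩⟩, List.prod_singleton.symm⟩

lemma circuitMonoid_le_unitary
    (hG : G ⊆ unitary (Matrix (Fin d × Fin d) (Fin d × Fin d) ℂ)) :
    circuitMonoid d N G ≤ unitary (Matrix (Fin N → Fin d) (Fin N → Fin d) ℂ) := by
  rintro _ ⟨l, hl, rfl⟩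
  refine list_prod_mem fun A hA => ?_
  obtain ⟨u, ⟨hu, rfl⟩ | ⟨hu, rfl⟩⟩ := hl A hA
  · exact layerMatrix_mem_unitary disjointPairs_evenPairs fun p hp => hG (hu p hp)
  · exact layerMatrix_mem_unitary disjointPairs_oddPairs fun p hp => hG (hu p hp)

variable {H : Submonoid (Matrix (Fin N → Fin d) (Fin N → Fin d) ℂ)}
  (hc : IsClosed (H : Set (Matrix (Fin N → Fin d) (Fin N → Fin d) ℂ)))
  (hu : H ≤ unitary (Matrix (Fin N → Fin d) (Fin N → Fin d) ℂ)) (hP : DisjointPairs P)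
  (hlayer : ∀ u, (∀ p ∈ P, u p ∈ G) → layerMatrix d N P u ∈ H)

include hc hu hlayer in
lemma gateHom_mem (p : P) {v g : Matrix (Fin d × Fin d) (Fin d × Fin d) ℂ}
    (hg : g ∈ unitary (Matrix (Fin d × Fin d) (Fin d × Fin d) ℂ)) (hgG : g ∈ G)
    (hv : v * g ∈ G) : gateHom d hP p v ∈ H := by
  rw [gateHom_eq_layerMatrix_mul_star hP p v hg]
  refine mul_mem (hlayer _ fun q _ => ?_)
    (star_mem_of_isClosed hc hu (hlayer _ fun _ _ => hgG))
  by_cases hq : q = p <;> simp [hq, hgG, hv]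

include hlayer in
lemma map_mem_complexGenerators_of_gateHom {V : Set (Matrix (Fin d × Fin d) (Fin d × Fin d) ℂ)}
    (hV : IsOpen V) (hG : G = DualUnitary d ∩ V) (hne : G.Nonempty) (p : P)
    (ψ : Matrix (Fin d) (Fin d) ℂ →⋆ₐ[ℂ] Matrix (Fin d × Fin d) (Fin d × Fin d) ℂ)
    (hψ : ∀ u ∈ unitary (Matrix (Fin d) (Fin d) ℂ), ∀ g ∈ DualUnitary d,
      ψ u * g ∈ DualUnitary d) (a : Matrix (Fin d) (Fin d) ℂ) :
    gateHom d hP p (ψ a) ∈ complexGenerators hc hu := by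
  subst hG
  obtain ⟨g, hg, hgV⟩ := hne
  have hcont : Continuous fun u => ψ u * g :=
    ψ.toAlgHom.toLinearMap.continuous_of_finiteDimensional.mul continuous_const
  have hnear : ∀ᶠ u in 𝓝 1, ψ u * g ∈ V :=
    hcont.continuousAt.eventually_mem (hV.mem_nhds (by simpa using hgV))
  refine map_mem_complexGenerators hc hu ((gateHom d hP p).comp ψ) ?_ a
  filter_upwards [nhdsWithin_le_nhds hnear, self_mem_nhdsWithin] with u huV hu'
  exact gateHom_mem hc hu hP hlayer p hg.1 ⟨hg, hgV⟩ ⟨hψ u hu' g hg, huV⟩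

lemma leftFactorHom_refl (a : Matrix (Fin d) (Fin d) ℂ) :
    leftFactorHom (Equiv.refl (Fin d × Fin d)) a = a ⊗ₖ 1 := rfl

lemma leftFactorHom_prodComm (b : Matrix (Fin d) (Fin d) ℂ) :
    leftFactorHom (Equiv.prodComm (Fin d) (Fin d)) b = 1 ⊗ₖ b :=
  swapSites_kronecker b 1

include hlayer in
lemma gateHom_mem_complexGenerators [Nontrivial (Fin d)]
    {V : Set (Matrix (Fin d × Fin d) (Fin d × Fin d) ℂ)} (hV : IsOpen V)
    (hG : G = DualUnitary d ∩ V) (hne : G.Nonempty) (p : P)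
    (W : Matrix (Fin d × Fin d) (Fin d × Fin d) ℂ) :
    gateHom d hP p W ∈ complexGenerators hc hu := by
  have hGd : G ⊆ DualUnitary d := hG ▸ Set.inter_subset_left
  obtain ⟨g, hgG, hgs⟩ := exists_not_swapLike hne hV hG
  let L : LieSubalgebra ℂ (Matrix (Fin d × Fin d) (Fin d × Fin d) ℂ) :=
    (complexGenerators hc hu).comap (gateHom d hP p).toAlgHom.toLieHom
  have hfirst : ∀ a : Matrix (Fin d) (Fin d) ℂ, a ⊗ₖ 1 ∈ L := fun a => by
    rw [← leftFactorHom_refl]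
    refine map_mem_complexGenerators_of_gateHom hc hu hP hlayer hV hG hne p _
      (fun u hu' g hg => ?_) a
    exact kronecker_one_mul_mem_dualUnitary hu' hg
  have hsecond : ∀ b : Matrix (Fin d) (Fin d) ℂ, 1 ⊗ₖ b ∈ L := fun b => by
    rw [← leftFactorHom_prodComm]
    refine map_mem_complexGenerators_of_gateHom hc hu hP hlayer hV hG hne p _
      (fun u hu' g hg => ?_) b
    rw [leftFactorHom_prodComm]
    exact one_kronecker_mul_mem_dualUnitary hu' hg
  have hconj : ∀ W ∈ L, g * W * star g ∈ L := fun W hW => by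
    change gateHom d hP p (g * W * star g) ∈ complexGenerators hc hu
    rw [← layerMatrix_conj_gateHom hP p (u := fun _ => g) (fun _ _ => (hGd hgG).1) W]
    exact conj_mem_complexGenerators hc hu hW (hlayer _ fun _ _ => hgG)
  exact (lieSubalgebra_eq_top_of_not_swapLike hfirst hsecond (hGd hgG) hgs hconj ▸
    LieSubalgebra.mem_top W : W ∈ L)

lemma complexGenerators_eq_top_of_adjacent [Nontrivial (Fin d)] {n : ℕ}
    {H : Submonoid (Matrix (Fin (n + 2) → Fin d) (Fin (n + 2) → Fin d) ℂ)}
    (hc : IsClosed (H : Set (Matrix (Fin (n + 2) → Fin d) (Fin (n + 2) → Fin d) ℂ)))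
    (hu : H ≤ unitary (Matrix (Fin (n + 2) → Fin d) (Fin (n + 2) → Fin d) ℂ))
    (hpair : ∀ (i : Fin (n + 1)) (a b : Matrix (Fin d) (Fin d) ℂ),
      siteOp i.castSucc a * siteOp i.succ b ∈ complexGenerators hc hu) :
    complexGenerators hc hu = ⊤ := by
  obtain ⟨k, l, hkl⟩ := exists_pair_ne (Fin d)
  have hscalar : single k l (1 : ℂ) ∉ Set.range (scalar (Fin d)) := by
    rintro ⟨z, hz⟩
    simpa [hkl] using congrFun₂ hz k l
  refine lieSubalgebra_chain_eq_top (fun s a => ?_) fun i =>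
    ⟨single k l 1, single k l 1, hscalar, hscalar, hpair i _ _⟩
  cases s using Fin.cases with
  | zero => simpa [siteOp_one] using hpair 0 a 1
  | succ i => simpa [siteOp_one] using hpair i 1 a

include hc hu in
lemma unitary_le_of_layerMatrix_mem [Nontrivial (Fin d)] (hN : 2 ≤ N)
    {V : Set (Matrix (Fin d × Fin d) (Fin d × Fin d) ℂ)} (hV : IsOpen V)
    (hG : G = DualUnitary d ∩ V) (hne : G.Nonempty)
    (heven : ∀ u, (∀ p ∈ evenPairs N, u p ∈ G) → layerMatrix d N (evenPairs N) u ∈ H)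
    (hodd : ∀ u, (∀ p ∈ oddPairs N, u p ∈ G) → layerMatrix d N (oddPairs N) u ∈ H) :
    unitary (Matrix (Fin N → Fin d) (Fin N → Fin d) ℂ) ≤ H := by
  obtain ⟨n, rfl⟩ := Nat.exists_eq_add_of_le' hN
  refine unitary_le_of_complexGenerators_eq_top hc hu
    (complexGenerators_eq_top_of_adjacent hc hu fun i a b => ?_)
  obtain hi | hi := Nat.mod_two_eq_zero_or_one i
  · have hp : (i.castSucc, i.succ) ∈ evenPairs (n + 2) := by simp [evenPairs, hi]
    rw [← gateHom_kronecker disjointPairs_evenPairs ⟨_, hp⟩]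
    exact gateHom_mem_complexGenerators hc hu disjointPairs_evenPairs heven hV hG hne _ _
  · have hp : (i.castSucc, i.succ) ∈ oddPairs (n + 2) := by simp [oddPairs, hi]
    rw [← gateHom_kronecker disjointPairs_oddPairs ⟨_, hp⟩]
    exact gateHom_mem_complexGenerators hc hu disjointPairs_oddPairs hodd hV hG hne _ _

end Circuits

/-- Any nonempty relatively open subset `G` of the dual-unitary gates `DU(d²)` is brick-wall
universal: brick-wall circuits on `N ≥ 2` qudits with gates from `G` are dense in `U(d^N)`. -/
theorem dualUnitary_brickwall_universal (d N : ℕ) (hd : 2 ≤ d) (hN : 2 ≤ N)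
    (G : Set (Matrix (Fin d × Fin d) (Fin d × Fin d) ℂ))
    (hne : G.Nonempty) (hsub : G ⊆ DualUnitary d)
    (hopen : ∃ V : Set (Matrix (Fin d × Fin d) (Fin d × Fin d) ℂ),
        IsOpen V ∧ G = DualUnitary d ∩ V) :
    ∀ M ∈ unitary (Matrix (Fin N → Fin d) (Fin N → Fin d) ℂ),
      M ∈ closure (BrickCircuits d N G) := by
  obtain ⟨V, hV, hG⟩ := hopen
  have : Nontrivial (Fin d) := Fin.nontrivial_iff_two_le.2 hd
  let C := circuitMonoid d N G
  have hclosed : IsClosed (C.topologicalClosure : Set (Matrix (Fin N → Fin d) (Fin N → Fin d) ℂ)) :=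
    C.isClosed_topologicalClosure
  have hunitary : C.topologicalClosure ≤ unitary (Matrix (Fin N → Fin d) (Fin N → Fin d) ℂ) :=
    C.topologicalClosure_minimal (circuitMonoid_le_unitary fun g hg => (hsub hg).1) isClosed_unitary
  exact unitary_le_of_layerMatrix_mem hclosed hunitary hN hV hG hne
    (fun u hu => C.le_topologicalClosure (layerMatrix_evenPairs_mem_circuitMonoid hu))
    (fun u hu => C.le_topologicalClosure (layerMatrix_oddPairs_mem_circuitMonoid hu))
end
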